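/- For every Dyck path λ of order n, the generating function of cover-inclusive Dyck tilings with lower path λ by the art statistic satisfies Σ_{T ∈ D(λ,*)} q^{art(T)} = [n]_q! / Π_{chords c of λ} [|c|]_q, as an identity of polynomials in q. -/

import Mathlib

open Finset

noncomputable section

/-- A Dyck path of order `n`: a word of `2n` steps (`true` = up-step `(+1,+1)`,
`false` = down-step `(+1,-1)`) from `(-n,0)` to `(n,0)` staying weakly above the x-axis. -/
structure DyckPath (n : ℕ) where
  step : Fin (2 * n) → Bool
  balanced : (Finset.univ.filter fun i => step i = true).card = n
  nonneg : ∀ k : ℕ, k ≤ 2 * n →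
    (Finset.univ.filter fun i : Fin (2 * n) => (i : ℕ) < k ∧ step i = false).card ≤
      (Finset.univ.filter fun i : Fin (2 * n) => (i : ℕ) < k ∧ step i = true).card

namespace DyckPath

/-- Height of the path above column `x` (columns run from `-n` to `n`). -/
def ht {n : ℕ} (P : DyckPath n) (x : ℤ) : ℤ :=
  ((Finset.univ.filter fun i : Fin (2 * n) => ((i : ℕ) : ℤ) < x + n ∧ P.step i = true).card : ℤ) -
    ((Finset.univ.filter fun i : Fin (2 * n) => ((i : ℕ) : ℤ) < x + n ∧ P.step i = false).card : ℤ)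

/-- Height of the path at lattice point number `k`, `0 ≤ k ≤ 2n`
(point `k` lies at column `k - n`). -/
def pt {n : ℕ} (P : DyckPath n) (k : ℕ) : ℤ := P.ht ((k : ℤ) - n)

end DyckPath

/-- `IsChord P p q`: the up-step at (0-indexed) position `p` matches the down-step at
position `q`, forming a chord of `P`. -/
def IsChord {n : ℕ} (P : DyckPath n) (p q : ℕ) : Prop :=
  p < q ∧ q < 2 * n ∧
    (∃ hp : p < 2 * n, P.step ⟨p, hp⟩ = true) ∧
    (∃ hq : q < 2 * n, P.step ⟨q, hq⟩ = false) ∧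
    P.pt (q + 1) = P.pt p ∧
    ∀ m : ℕ, p < m → m ≤ q → P.pt p < P.pt m

/-- A natural labeling of the chord poset of `P`: the chord labeled `i` has its up-step at
(0-indexed) position `l i` and matching down-step at position `r i`; distinct labels name
distinct chords; and if one chord is nested inside another it receives a larger label. -/
structure ChordLabeling {n : ℕ} (P : DyckPath n) where
  l : Fin n → ℕ
  r : Fin n → ℕ
  chord : ∀ i, IsChord P (l i) (r i)
  inj : Function.Injective l
  natural : ∀ i j : Fin n, l j < l i → r i < r j → j < i

/-- The length of the chord labeled `i`: the number of up steps of `P` between and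
including its two endpoints. -/
def chordLen {n : ℕ} {P : DyckPath n} (C : ChordLabeling P) (i : Fin n) : ℕ :=
  (Finset.univ.filter fun m : Fin (2 * n) =>
    C.l i ≤ (m : ℕ) ∧ (m : ℕ) ≤ C.r i ∧ P.step m = true).card

/-- The growth sequence `p_1, …, p_n` associated with a natural chord labeling:
`p i = #{j<i : l j < l i} + #{j<i : r j < l i}`. -/
def seqOf {n : ℕ} {P : DyckPath n} (C : ChordLabeling P) (i : Fin n) : ℕ :=
  (Finset.univ.filter fun j : Fin n => j < i ∧ C.l j < C.l i).card +
    (Finset.univ.filter fun j : Fin n => j < i ∧ C.r j < C.l i).card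

/-- `σ` is the standardization of the word `w` (with distinct letters). -/
def IsStandardization {n : ℕ} (w : Fin n → ℕ) (σ : Equiv.Perm (Fin n)) : Prop :=
  ∀ i j : Fin n, σ i < σ j ↔ w i < w j

/-- `σ ∈ 𝓛(P_λ)`: σ is `L₀ ∘ L⁻¹` for some natural labeling `L` of the chord poset,
equivalently the standardization of the word of left endpoints of a natural labeling. -/
def LinExt {n : ℕ} (P : DyckPath n) (σ : Equiv.Perm (Fin n)) : Prop :=
  ∃ C : ChordLabeling P, IsStandardization C.l σ

/-- Successor index in `Fin n` (used only under the guard `i+1 < n`). -/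
def nextIdx {n : ℕ} (i : Fin n) : Fin n := ⟨((i : ℕ) + 1) % n, Nat.mod_lt _ i.pos⟩

/-- Descent set of a word: positions `i` with `i+1 < n` and `w i > w (i+1)`. -/
def descentFinset {n : ℕ} (w : Fin n → ℕ) : Finset (Fin n) :=
  Finset.univ.filter fun i => (i : ℕ) + 1 < n ∧ w (nextIdx i) < w i

/-- Number of inversions of a word. -/
def wordInv {n : ℕ} (w : Fin n → ℕ) : ℕ :=
  (Finset.univ.filter fun p : Fin n × Fin n => p.1 < p.2 ∧ w p.2 < w p.1).card

/-- The word of values of a permutation. -/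
def permWord {n : ℕ} (σ : Equiv.Perm (Fin n)) : Fin n → ℕ := fun i => (σ i : ℕ)

/-- inv(σ). -/
def permInv {n : ℕ} (σ : Equiv.Perm (Fin n)) : ℕ := wordInv (permWord σ)

/-- des(σ). -/
def permDes {n : ℕ} (σ : Equiv.Perm (Fin n)) : ℕ := (descentFinset (permWord σ)).card

/-- `REM_i(w) = {k > i : w i > w k > w (i+1)}`, the right embraced numbers. -/
def remSet {n : ℕ} (w : Fin n → ℕ) (i : Fin n) : Finset (Fin n) :=
  Finset.univ.filter fun k => i < k ∧ w (nextIdx i) < w k ∧ w k < w i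

/-- desdif(σ) = Σ_{i ∈ DES σ} (σ i − σ (i+1)). -/
def desdif {n : ℕ} (σ : Equiv.Perm (Fin n)) : ℕ :=
  ∑ i ∈ descentFinset (permWord σ), (permWord σ i - permWord σ (nextIdx i))

/-- res(σ) = Σ_{i ∈ DES σ} #{k < i : σ i > σ k > σ (i+1)}. -/
def resStat {n : ℕ} (σ : Equiv.Perm (Fin n)) : ℕ :=
  ∑ i ∈ descentFinset (permWord σ),
    (Finset.univ.filter fun k : Fin n =>
      k < i ∧ permWord σ (nextIdx i) < permWord σ k ∧ permWord σ k < permWord σ i).card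

/-- The Mahonian statistic mad(σ) = desdif(σ) + res(σ). -/
def mad {n : ℕ} (σ : Equiv.Perm (Fin n)) : ℕ := desdif σ + resStat σ

/-- σ avoids the pattern 231. -/
def Avoids231 {n : ℕ} (σ : Equiv.Perm (Fin n)) : Prop :=
  ¬∃ i j k : Fin n, i < j ∧ j < k ∧ σ k < σ i ∧ σ i < σ j

/-- The boxes of the skew shape `lam/mu` (with `mu` weakly above `lam`), each box
recorded by its bottom corner (a lattice point `(x, z)` with `z ≡ x + n (mod 2)`). -/
def skewCells {n : ℕ} (lam mu : DyckPath n) : Finset (ℤ × ℤ) :=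
  ((Finset.Icc (-(n : ℤ)) n) ×ˢ (Finset.Icc (0 : ℤ) n)).filter fun c =>
    lam.ht c.1 ≤ c.2 ∧ c.2 + 2 ≤ mu.ht c.1 ∧ (c.2 - c.1 - n) % 2 = 0

/-- A Dyck tile, recorded by the set of bottom corners of its boxes: these form
a Dyck-path shape, i.e. a ±1-step lattice path whose two ends are lowest. -/
def IsDyckTile (t : Finset (ℤ × ℤ)) : Prop :=
  ∃ (a b : ℤ) (f : ℤ → ℤ), a ≤ b ∧
    (∀ x : ℤ, a ≤ x → x < b → f (x + 1) = f x + 1 ∨ f (x + 1) = f x - 1) ∧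
    f b = f a ∧ (∀ x : ℤ, a ≤ x → x ≤ b → f a ≤ f x) ∧
    t = (Finset.Icc a b).image fun x => (x, f x)

/-- A Dyck tiling of order `n`: a tiling of the skew shape between two Dyck paths of
order `n` by Dyck tiles. -/
structure DyckTiling (n : ℕ) where
  lower : DyckPath n
  upper : DyckPath n
  below : ∀ x : ℤ, lower.ht x ≤ upper.ht x
  tiles : Finset (Finset (ℤ × ℤ))
  isDyck : ∀ t ∈ tiles, IsDyckTile t
  disj : ∀ t ∈ tiles, ∀ u ∈ tiles, t ≠ u → Disjoint t u
  cover : tiles.biUnion id = skewCells lower upper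

namespace DyckTiling

/-- Number of boxes of the skew shape. -/
def area {n : ℕ} (T : DyckTiling n) : ℕ := (skewCells T.lower T.upper).card

/-- Number of tiles. -/
def numTiles {n : ℕ} (T : DyckTiling n) : ℕ := T.tiles.card

/-- art(T) = (area(T) + tiles(T)) / 2. -/
def art {n : ℕ} (T : DyckTiling n) : ℕ := (T.area + T.numTiles) / 2

/-- dis(T): the number of step positions where the lower path steps down while the
upper path steps up. -/
def dis {n : ℕ} (T : DyckTiling n) : ℕ :=
  (Finset.univ.filter fun i : Fin (2 * n) =>
    T.lower.step i = false ∧ T.upper.step i = true).card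

/-- Cover-inclusiveness: whenever a tile has a box strictly above a box of another tile,
its horizontal extent is contained in that of the other tile. -/
def CoverInclusive {n : ℕ} (T : DyckTiling n) : Prop :=
  ∀ t ∈ T.tiles, ∀ u ∈ T.tiles,
    (∃ p ∈ t, ∃ q ∈ u, (p : ℤ × ℤ).1 = (q : ℤ × ℤ).1 ∧ (q : ℤ × ℤ).2 < (p : ℤ × ℤ).2) →
    ∀ p ∈ t, ∃ y : ℤ, ((p : ℤ × ℤ).1, y) ∈ u

end DyckTiling

/-- Height function of the spread at column `s` of a Dyck path. -/
def spreadHt {n : ℕ} (P : DyckPath n) (s x : ℤ) : ℤ :=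
  if x < s then P.ht (x + 1) else if x = s then P.ht s + 1 else P.ht (x - 1)

/-- Spread of a tile at column `s`: points left of `s` move left, points right of `s`
move right, and a point at column `s` is duplicated upward. -/
def spreadTile (s : ℤ) (t : Finset (ℤ × ℤ)) : Finset (ℤ × ℤ) :=
  ((t.filter fun p => p.1 ≤ s).image fun p => (p.1 - 1, p.2)) ∪
    ((t.filter fun p => p.1 = s).image fun p => (p.1, p.2 + 1)) ∪
    ((t.filter fun p => s ≤ p.1).image fun p => (p.1 + 1, p.2))

/-- Spread of a set of tiles at column `s`. -/
def spreadTiles (s : ℤ) (ts : Finset (Finset (ℤ × ℤ))) : Finset (Finset (ℤ × ℤ)) :=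
  ts.image (spreadTile s)

/-- Column `c` is eligible for a tiling with upper-boundary height function `h` and
tile set `ts`: the upper boundary has an up step ending at column `c`, and its point at
column `c` is not the top corner of a one-box tile. -/
def EligibleCol (h : ℤ → ℤ) (ts : Finset (Finset (ℤ × ℤ))) (c : ℤ) : Prop :=
  h c = h (c - 1) + 1 ∧ ({(c, h c - 2)} : Finset (ℤ × ℤ)) ∉ ts

/-- `T'` is the result of the strip-grow map applied to `(T, s)`: spread `T` at `s` and
add a one-box tile on each up step of the (spread) upper boundary starting at a column
`≥ s` (i.e. strictly to the right of column `s`). -/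
def StripGrowRel {n : ℕ} (T : DyckTiling n) (s : ℤ) (T' : DyckTiling (n + 1)) : Prop :=
  (∀ x : ℤ, T'.lower.ht x = spreadHt T.lower s x) ∧
  (∀ x : ℤ, T'.upper.ht x =
    if s ≤ x ∧ spreadHt T.upper s (x + 1) = spreadHt T.upper s x + 1 then
      spreadHt T.upper s x + 2
    else spreadHt T.upper s x) ∧
  T'.tiles = spreadTiles s T.tiles ∪
    ((Finset.Icc s (n : ℤ)).filter fun x =>
        spreadHt T.upper s (x + 1) = spreadHt T.upper s x + 1).image
      (fun x => ({(x, spreadHt T.upper s x)} : Finset (ℤ × ℤ)))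

/-- `T'` is the result of the ribbon-grow map applied to `(T, s)`: spread `T` at `s`,
and if the special column `Q` of the spread tiling is strictly right of `s`, add a
ribbon of one-box tiles at all columns strictly between `s` and `Q`. -/
def RibbonGrowRel {n : ℕ} (T : DyckTiling n) (s : ℤ) (T' : DyckTiling (n + 1)) : Prop :=
  (∀ x : ℤ, T'.lower.ht x = spreadHt T.lower s x) ∧
  ∃ Q : ℤ,
    EligibleCol (spreadHt T.upper s) (spreadTiles s T.tiles) Q ∧
    (∀ c : ℤ, EligibleCol (spreadHt T.upper s) (spreadTiles s T.tiles) c → c ≤ Q) ∧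
    (∀ x : ℤ, T'.upper.ht x =
      if s < x ∧ x < Q then spreadHt T.upper s x + 2 else spreadHt T.upper s x) ∧
    T'.tiles = spreadTiles s T.tiles ∪
      (Finset.Ioo s Q).image (fun x => ({(x, spreadHt T.upper s x)} : Finset (ℤ × ℤ)))

/-- `s` is the special column of `T`: its rightmost eligible column. -/
def SpecialCol {n : ℕ} (T : DyckTiling n) (s : ℤ) : Prop :=
  EligibleCol T.upper.ht T.tiles s ∧ ∀ c : ℤ, EligibleCol T.upper.ht T.tiles c → c ≤ s

/-- In the strip-shrink map applied to `T'` with special column `s`, a one-box tile is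
removed at column `x`: `x` is right of `s` and there is a one-box tile there that is
part of an up step of the upper boundary. -/
def StripRemovedAt {n : ℕ} (T' : DyckTiling n) (s x : ℤ) : Prop :=
  s < x ∧ T'.upper.ht x = T'.upper.ht (x - 1) + 1 ∧
    ({(x, T'.upper.ht x - 2)} : Finset (ℤ × ℤ)) ∈ T'.tiles

instance {n : ℕ} (T' : DyckTiling n) (s x : ℤ) : Decidable (StripRemovedAt T' s x) := by
  unfold StripRemovedAt; infer_instance

/-- `(T, s)` is the result of the strip-shrink map applied to `T'`: `s` is the special
column of `T'`; all one-box tiles right of `s` lying on up steps of the upper boundary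
are removed; and the result is the spread of `T` at `s`. -/
def StripShrinkRel {n : ℕ} (T' : DyckTiling (n + 1)) (T : DyckTiling n) (s : ℤ) : Prop :=
  SpecialCol T' s ∧
  (∀ x : ℤ, spreadHt T.lower s x = T'.lower.ht x) ∧
  (∀ x : ℤ, spreadHt T.upper s x =
    if StripRemovedAt T' s x then T'.upper.ht x - 2 else T'.upper.ht x) ∧
  spreadTiles s T.tiles =
    T'.tiles \ (((Finset.Ioc s ((n : ℤ) + 1)).filter fun x => StripRemovedAt T' s x).image
      fun x => ({(x, T'.upper.ht x - 2)} : Finset (ℤ × ℤ)))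

/-- `(T, s)` is the result of the ribbon-shrink map applied to `T'`: `s` is the special
column of `T'`; the maximal run of topmost one-box tiles in columns `s+1, s+2, …` is
removed; and the result is the spread of `T` at `s`. -/
def RibbonShrinkRel {n : ℕ} (T' : DyckTiling (n + 1)) (T : DyckTiling n) (s : ℤ) : Prop :=
  SpecialCol T' s ∧
  ∃ r : ℤ, s < r ∧
    (∀ x : ℤ, s < x → x < r → ({(x, T'.upper.ht x - 2)} : Finset (ℤ × ℤ)) ∈ T'.tiles) ∧
    ({(r, T'.upper.ht r - 2)} : Finset (ℤ × ℤ)) ∉ T'.tiles ∧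
    (∀ x : ℤ, spreadHt T.lower s x = T'.lower.ht x) ∧
    (∀ x : ℤ, spreadHt T.upper s x =
      if s < x ∧ x < r then T'.upper.ht x - 2 else T'.upper.ht x) ∧
    spreadTiles s T.tiles =
      T'.tiles \ ((Finset.Ioo s r).image fun x => ({(x, T'.upper.ht x - 2)} : Finset (ℤ × ℤ)))

/-- `IsDTS n p T`: `T` is the Dyck tiling `DTS(p_1, …, p_n)` (indices 0-based, so the
growth column for step `i` is `p i - i`). -/
inductive IsDTS : (n : ℕ) → (Fin n → ℕ) → DyckTiling n → Prop where
  | nil (p : Fin 0 → ℕ) (T : DyckTiling 0) : IsDTS 0 p T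
  | cons (n : ℕ) (p : Fin (n + 1) → ℕ) (T : DyckTiling n) (T' : DyckTiling (n + 1)) :
      IsDTS n (fun i => p i.castSucc) T →
      StripGrowRel T ((p (Fin.last n) : ℤ) - n) T' → IsDTS (n + 1) p T'

/-- `IsDTR n p T`: `T` is the Dyck tiling `DTR(p_1, …, p_n)`. -/
inductive IsDTR : (n : ℕ) → (Fin n → ℕ) → DyckTiling n → Prop where
  | nil (p : Fin 0 → ℕ) (T : DyckTiling 0) : IsDTR 0 p T
  | cons (n : ℕ) (p : Fin (n + 1) → ℕ) (T : DyckTiling n) (T' : DyckTiling (n + 1)) :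
      IsDTR n (fun i => p i.castSucc) T →
      RibbonGrowRel T ((p (Fin.last n) : ℤ) - n) T' → IsDTR (n + 1) p T'

/-- `T = DTS(λ, σ)`. -/
def IsDTSof {n : ℕ} (lam : DyckPath n) (σ : Equiv.Perm (Fin n)) (T : DyckTiling n) : Prop :=
  ∃ C : ChordLabeling lam, IsStandardization C.l σ ∧ IsDTS n (seqOf C) T

/-- `T = DTR(λ, σ)`. -/
def IsDTRof {n : ℕ} (lam : DyckPath n) (σ : Equiv.Perm (Fin n)) (T : DyckTiling n) : Prop :=
  ∃ C : ChordLabeling lam, IsStandardization C.l σ ∧ IsDTR n (seqOf C) T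

/-- Increment `a` if it exceeds `p`. -/
def bump (p a : ℕ) : ℕ := if p < a then a + 1 else a

/-- The perfect matching `match(p_1, …, p_n)` of `{1, …, 2n}`. -/
def matchSeq : (n : ℕ) → (Fin n → ℕ) → Finset (ℕ × ℕ)
  | 0, _ => ∅
  | n + 1, p =>
    ((matchSeq n fun i => p i.castSucc).image fun q =>
      (bump (p (Fin.last n)) q.1, bump (p (Fin.last n)) q.2)) ∪
      {(p (Fin.last n) + 1, 2 * (n + 1))}

/-- The number of nestings of a matching: pairs `(a,b)`, `(c,d)` with `c < a < b < d`. -/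
def nestings (M : Finset (ℕ × ℕ)) : ℕ :=
  ((M ×ˢ M).filter fun q => q.2.1 < q.1.1 ∧ q.1.1 < q.1.2 ∧ q.1.2 < q.2.2).card

/-- `w` is the min-word of `M`: the list of the smaller elements of the pairs of `M`,
sorted by the larger elements. -/
def IsMinWord (n : ℕ) (M : Finset (ℕ × ℕ)) (w : Fin n → ℕ) : Prop :=
  ∃ b : Fin n → ℕ, StrictMono b ∧ (∀ i, w i < b i) ∧
    M = Finset.univ.image fun i => (w i, b i)

/-- The number of tiles of `T` containing boxes over both endpoint columns of the
chord with endpoints at step positions `p < q`. -/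
def chordTileCount {n : ℕ} (T : DyckTiling n) (p q : ℕ) : ℕ :=
  (T.tiles.filter fun t =>
    (∃ c ∈ t, (c : ℤ × ℤ).1 = (p : ℤ) + 1 - n) ∧ (∃ c ∈ t, (c : ℤ × ℤ).1 = (q : ℤ) - n)).card

/-- A Dyck tableau of order `n` over the zigzag path `Z` of order `n+1`: a skew shape
`Z/μ` with `n` dots, one in each column of the skew shape through a valley of `Z`. -/
structure DyckTableau (n : ℕ) (Z : DyckPath (n + 1)) where
  upper : DyckPath (n + 1)
  below : ∀ x : ℤ, Z.ht x ≤ upper.ht x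
  dots : Finset (ℤ × ℤ)
  sub : dots ⊆ skewCells Z upper
  card_dots : dots.card = n
  valley : ∀ x : ℤ, Z.ht (x - 1) = Z.ht x + 1 → Z.ht (x + 1) = Z.ht x + 1 →
    (dots.filter fun c => c.1 = x).card = 1

/-- The `q`-integer `[m]_q = 1 + q + ⋯ + q^(m-1)` as a polynomial. -/
def qint (m : ℕ) : Polynomial ℤ := ∑ i ∈ Finset.range m, Polynomial.X ^ i

/-- The `q`-factorial `[n]_q!`. -/
def qfact (n : ℕ) : Polynomial ℤ := ∏ i ∈ Finset.range n, qint (i + 1)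

/-!
Walking along the lower path, record for each step the number `j` of tiles that cross it and the
number `k` of tiles over its right end. In a cover-inclusive tiling all tiles are translates of
pieces of the lower path and the crossing tiles are the lowest ones, so this *history* determines
the tiling. Following a single tile one finds that a history is admissible exactly when `k` changes
by at most one, in the direction opposite to the step, and `j` at a down step equals `j` at the
matching up step, having stayed at least as large in between; moreover `art` is the sum of `k` over
the up steps and of `k - j` over the down steps.

It remains to sum `q ^ art` over histories, by recursion on the first-return decomposition of the
path. What survives the recursion is the pairing of the completions of a history, as a function of
the number of tiles above the innermost crossing ones, with a `q`-shifted product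
`(1 + q x) ⋯ (1 + q ^ m x)`: a chord of length `ℓ` turns `m` into `m + ℓ` and contributes the
factors `[m + 1]_q ⋯ [m + ℓ]_q`, divided by the `q`-lengths of this chord and of those
inside it.
-/

namespace DyckTilingArt

open Polynomial DyckStep

/-! ### Dyck words and their chords -/

@[elab_as_elim]
theorem dyckWord_induction {motive : DyckWord → Prop} (zero : motive 0)
    (nest_add : ∀ a b, motive a → motive b → motive (a.nest + b)) (u : DyckWord) : motive u := by
  by_cases hu : u = 0
  · exact hu ▸ zero
  · rw [← DyckWord.nest_insidePart_add_outsidePart hu]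
    exact nest_add _ _ (dyckWord_induction zero nest_add _) (dyckWord_induction zero nest_add _)
termination_by u.semilength
decreasing_by exacts [DyckWord.semilength_insidePart_lt hu, DyckWord.semilength_outsidePart_lt hu]

theorem toList_nest_add (a b : DyckWord) :
    (a.nest + b).toList = U :: (a.toList ++ D :: b.toList) :=
  congrArg (U :: ·) (List.append_assoc a.toList [D] b.toList)

/-- The number of up steps met along a word before it leaves the current level downwards by
`d + 1` steps. For `d = 0`, just after an up step, these are the up steps strictly inside the
chord of that step. -/
def upsBeforeReturn : ℕ → List DyckStep → ℕ
  | _, [] => 0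
  | d, U :: s => upsBeforeReturn (d + 1) s + 1
  | 0, D :: _ => 0
  | d + 1, D :: s => upsBeforeReturn d s

/-- The product of the `q`-lengths of the chords of a word, one chord for each up step. -/
def chordProd : List DyckStep → ℤ[X]
  | [] => 1
  | U :: s => qint (upsBeforeReturn 0 s + 1) * chordProd s
  | D :: s => chordProd s

theorem upsBeforeReturn_append (u : DyckWord) (d : ℕ) (s : List DyckStep) :
    upsBeforeReturn d (u.toList ++ s) = u.semilength + upsBeforeReturn d s := by
  induction u using dyckWord_induction generalizing d s with
  | zero => exact (Nat.zero_add _).symm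
  | nest_add a b iha ihb =>
    simp only [toList_nest_add, List.cons_append, List.append_assoc, upsBeforeReturn, iha, ihb,
      DyckWord.semilength_add, DyckWord.semilength_nest]
    ring

theorem chordProd_cons_append_cons (a : DyckWord) (s : List DyckStep) :
    chordProd (U :: (a.toList ++ D :: s)) =
      qint (a.semilength + 1) * chordProd (a.toList ++ D :: s) := by
  simp only [chordProd, upsBeforeReturn_append, upsBeforeReturn, add_zero]

theorem chordProd_append (u : DyckWord) (s : List DyckStep) :
    chordProd (u.toList ++ s) = chordProd u.toList * chordProd s := by
  induction u using dyckWord_induction generalizing s with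
  | zero => exact (one_mul _).symm
  | nest_add a b iha ihb =>
    simp only [toList_nest_add, List.cons_append, List.append_assoc, chordProd_cons_append_cons,
      iha, ihb, chordProd, mul_assoc]

theorem chordProd_nest_add (a b : DyckWord) :
    chordProd (a.nest + b).toList =
      qint (a.semilength + 1) * chordProd a.toList * chordProd b.toList := by
  rw [toList_nest_add, chordProd_cons_append_cons, chordProd_append, chordProd, mul_assoc]

/-! ### `q`-identities -/

/-- The rising `q`-factorial `[m+1]_q ⋯ [m+n]_q`. -/
def qrise (m n : ℕ) : ℤ[X] := ∏ t ∈ range n, qint (m + t + 1)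

theorem qint_add (a b : ℕ) : qint (a + b) = qint a + X ^ a * qint b := by
  simp [qint, sum_range_add, pow_add, mul_sum]

theorem qrise_add (m a b : ℕ) : qrise m (a + b) = qrise m a * qrise (m + a) b := by
  simp [qrise, prod_range_add, add_assoc]

theorem qrise_zero_left (n : ℕ) : qrise 0 n = qfact n := by
  simp [qrise, qfact]

theorem qint_mul_sum_qrise (m n : ℕ) :
    qint (n + 1) * ∑ i ∈ range (m + 1), X ^ i * qrise i n = qrise m (n + 1) := by
  induction m with
  | zero => simp [qrise, prod_range_succ, mul_comm]
  | succ m ih =>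
    have hleft : qrise m (n + 1) = qint (m + 1) * qrise (m + 1) n := by
      rw [add_comm n, qrise_add]
      simp [qrise]
    have hright : qrise (m + 1) (n + 1) = qrise (m + 1) n * qint (m + 1 + (n + 1)) := by
      rw [qrise_add]
      simp [qrise, add_assoc]
    rw [sum_range_succ, mul_add, ih, hleft, hright, qint_add (m + 1)]
    ring

section Umbral

variable {R : Type*} [CommSemiring R]

/-- The `q`-shifted product `(1 + q^(i+1) x) ⋯ (1 + q^(i+s) x)`. -/
def qPochhammer (q : R) (i s : ℕ) : R[X] := ∏ t ∈ range s, (1 + C (q ^ (i + t + 1)) * X)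

theorem qPochhammer_zero (q : R) (i : ℕ) : qPochhammer q i 0 = 1 := rfl

theorem qPochhammer_add (q : R) (i s t : ℕ) :
    qPochhammer q i (s + t) = qPochhammer q i s * qPochhammer q (i + s) t := by
  simp only [qPochhammer, prod_range_add, add_assoc]

theorem qPochhammer_succ (q : R) (i s : ℕ) :
    qPochhammer q i (s + 1) = qPochhammer q i s * (1 + C (q ^ (i + s + 1)) * X) :=
  prod_range_succ _ _

theorem qPochhammer_comp (q : R) (n i s : ℕ) :
    (qPochhammer q i s).comp (C (q ^ n) * X) = qPochhammer q (i + n) s := by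
  rw [qPochhammer, Polynomial.prod_comp]
  refine prod_congr rfl fun t _ => ?_
  rw [add_comp, one_comp, mul_comp, C_comp, X_comp, ← mul_assoc, ← C_mul, ← pow_add]
  congr 4
  ring

theorem qPochhammer_comp_mul (q : R) (s : ℕ) :
    (qPochhammer q 0 s).comp (C q * X) * (1 + C q * X) = qPochhammer q 0 (s + 1) := by
  have hcomp := qPochhammer_comp q 1 0 s
  rw [pow_one] at hcomp
  rw [hcomp, add_comm s, qPochhammer_add, mul_comm]
  simp [qPochhammer]

/-- The umbral functional of a sequence `g`: the linear map sending `x ^ i` to `g i`. -/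
def umbral (g : ℕ → R) : R[X] →ₗ[R] R := (basisMonomials R).constr R g

theorem umbral_monomial (g : ℕ → R) (i : ℕ) (r : R) : umbral g (monomial i r) = r * g i := by
  have hbasis : monomial i r = r • basisMonomials R i := by
    rw [coe_basisMonomials, smul_monomial, smul_eq_mul, mul_one]
  rw [hbasis, map_smul, umbral, Module.Basis.constr_basis, smul_eq_mul]

theorem umbral_X_pow (g : ℕ → R) (i : ℕ) : umbral g (X ^ i) = g i := by
  rw [X_pow_eq_monomial, umbral_monomial, one_mul]

theorem umbral_one (g : ℕ → R) : umbral g 1 = g 0 := umbral_X_pow g 0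

theorem umbral_C_mul (g : ℕ → R) (r : R) (f : R[X]) : umbral g (C r * f) = r * umbral g f := by
  rw [← smul_eq_C_mul, map_smul, smul_eq_mul]

theorem umbral_mul_left (r : R) (g : ℕ → R) (f : R[X]) :
    umbral (fun i => r * g i) f = r * umbral g f := by
  induction f using Polynomial.induction_on' with
  | add f₁ f₂ h₁ h₂ => rw [map_add, map_add, h₁, h₂, mul_add]
  | monomial i a => rw [umbral_monomial, umbral_monomial, mul_left_comm]

theorem umbral_X_mul (g : ℕ → R) (f : R[X]) : umbral g (X * f) = umbral (fun i => g (i + 1)) f := by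
  induction f using Polynomial.induction_on' with
  | add f₁ f₂ h₁ h₂ => rw [mul_add, map_add, map_add, h₁, h₂]
  | monomial i a => rw [X_mul_monomial, umbral_monomial, umbral_monomial]

theorem umbral_umbral_X_pow_mul (q : R) (n : ℕ) (g : ℕ → R) (f s : R[X]) :
    umbral (fun e => q ^ (n * e) * umbral g (X ^ e * s)) f =
      umbral g (f.comp (C (q ^ n) * X) * s) := by
  induction f using Polynomial.induction_on' with
  | add f₁ f₂ h₁ h₂ => rw [map_add, h₁, h₂, add_comp, add_mul, map_add]
  | monomial e a =>
    rw [umbral_monomial, monomial_comp, mul_pow, ← C_pow, mul_assoc, mul_assoc, umbral_C_mul,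
      umbral_C_mul, pow_mul]

theorem umbral_shift_add (q : R) (e : ℕ) (g : ℕ → R) (f : R[X]) :
    umbral (fun b => q ^ b * g (e + b) + q ^ (b + 1) * g (e + b + 1)) f =
      umbral g (X ^ e * (f.comp (C q * X) * (1 + C q * X))) := by
  induction f using Polynomial.induction_on' with
  | add f₁ f₂ h₁ h₂ => rw [map_add, h₁, h₂, ← map_add, ← mul_add, ← add_mul, add_comp]
  | monomial b a =>
    have hpoly : X ^ e * ((monomial b a).comp (C q * X) * (1 + C q * X)) =
        monomial (e + b) (a * q ^ b) + monomial (e + b + 1) (a * q ^ (b + 1)) := by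
      simp only [← C_mul_X_pow_eq_monomial, mul_comp, pow_comp, C_comp, X_comp, C_mul, C_pow]
      ring
    rw [hpoly, map_add, umbral_monomial, umbral_monomial, umbral_monomial]
    ring

/-- The transfer operator of an up step. Over an up step the number `i` of tiles above the
innermost crossing number splits into `e + b`, of which `e` raise the crossing number, and one
tile may be lost. -/
def upTransfer (q : R) (G : ℕ → ℕ → R) (i : ℕ) : R :=
  ∑ e ∈ range (i + 1), q ^ i * G e (i - e) + ∑ e ∈ range i, q ^ (i - 1) * G e (i - 1 - e)

theorem upTransfer_zero (q : R) (G : ℕ → ℕ → R) : upTransfer q G 0 = G 0 0 := by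
  simp [upTransfer]

theorem upTransfer_succ (q : R) (G : ℕ → ℕ → R) (i : ℕ) :
    upTransfer q G (i + 1) =
      q * upTransfer q (fun e => G (e + 1)) i + (q ^ i * G 0 i + q ^ (i + 1) * G 0 (i + 1)) := by
  have hsecond : ∑ e ∈ range i, q ^ i * G (e + 1) (i - (e + 1)) =
      q * ∑ e ∈ range i, q ^ (i - 1) * G (e + 1) (i - 1 - e) := by
    rw [mul_sum]
    refine sum_congr rfl fun e he => ?_
    obtain ⟨i, rfl⟩ := Nat.exists_eq_add_of_lt (mem_range.1 he)
    rw [← mul_assoc, ← pow_succ', Nat.add_sub_cancel, Nat.add_sub_add_right]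
  simp only [upTransfer, add_tsub_cancel_right, sum_range_succ' _ (i + 1), sum_range_succ' _ i,
    hsecond, mul_add, mul_sum, Nat.add_sub_add_right, Nat.sub_zero, pow_succ', mul_assoc]
  ring

theorem umbral_upTransfer_X_mul (q : R) (G : ℕ → ℕ → R) (f : R[X]) :
    umbral (upTransfer q G) (X * f) =
      q * umbral (upTransfer q fun e => G (e + 1)) f +
        umbral (G 0) (f.comp (C q * X) * (1 + C q * X)) := by
  have hshift := umbral_shift_add q 0 (G 0)
  simp only [pow_zero, one_mul, zero_add] at hshift
  rw [umbral_X_mul, ← hshift]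
  induction f using Polynomial.induction_on' with
  | add f₁ f₂ h₁ h₂ =>
    simp only [map_add, mul_add, h₁, h₂]
    ring
  | monomial i a =>
    simp only [umbral_monomial, upTransfer_succ]
    ring

theorem umbral_upTransfer_qPochhammer (q : R) (G : ℕ → ℕ → R) (m : ℕ) :
    umbral (upTransfer q G) (qPochhammer q 0 m) =
      ∑ i ∈ range (m + 1),
        q ^ i * umbral (fun e => umbral (G e) (qPochhammer q 0 i))
          (qPochhammer q (i + 1) (m - i)) := by
  induction m generalizing G with
  | zero => simp [qPochhammer_zero, umbral_one, upTransfer_zero]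
  | succ m ih =>
    have hterm : ∀ i ∈ range (m + 1), q ^ i * umbral (fun e => umbral (G e) (qPochhammer q 0 i))
          (qPochhammer q (i + 1) (m + 1 - i)) =
        q ^ i * umbral (fun e => umbral (G e) (qPochhammer q 0 i))
            (qPochhammer q (i + 1) (m - i)) +
          q ^ (m + 2) * (q ^ i * umbral (fun e => umbral (G (e + 1)) (qPochhammer q 0 i))
            (qPochhammer q (i + 1) (m - i))) := by
      intro i hi
      have him : i ≤ m := Nat.lt_succ_iff.1 (mem_range.1 hi)
      rw [Nat.succ_sub him, qPochhammer_succ, show i + 1 + (m - i) + 1 = m + 2 by omega, mul_add,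
        mul_one, mul_left_comm, mul_comm _ X, map_add, umbral_C_mul, umbral_X_mul]
      ring
    rw [qPochhammer_succ, mul_add, mul_one, mul_left_comm, mul_comm _ X, map_add, umbral_C_mul,
      umbral_upTransfer_X_mul, qPochhammer_comp_mul, ih, ih, sum_range_succ _ (m + 1),
      sum_congr rfl hterm, sum_add_distrib, ← mul_sum, Nat.sub_self, qPochhammer_zero, umbral_one]
    ring

end Umbral

/-! ### Histories and the product formula -/

/-- The admissible records `(j, k')` of one step, made when `k` tiles lie over the column before
the step and `st` lists, innermost first, how many tiles cross each open up step: `j` tiles cross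
the step and `k'` tiles lie over the column after it. A down step is crossed by the same tiles as
the up step it matches. -/
def stepChoices : DyckStep → ℕ → List ℕ → Finset (ℕ × ℕ)
  | U, k, st => Ico (st.headD 0) (k + 1) ×ˢ {k} ∪ Ico (st.headD 0) k ×ˢ {k - 1}
  | D, _, [] => ∅
  | D, k, v :: _ => if v ≤ k then {(v, k), (v, k + 1)} else ∅

/-- The stack of crossing numbers of the open up steps after one more step. -/
def nextStack : DyckStep → List ℕ → ℕ → List ℕ
  | U, st, j => j :: st
  | D, st, _ => st.tail

/-- The exponent of `q` contributed by one step of a history. -/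
def stepWeight : DyckStep → ℕ × ℕ → ℕ
  | U, c => c.2
  | D, c => c.2 - c.1

/-- The histories along a word: the lists of records that are admissible step by step and end
with no tile and no open up step. They encode cover-inclusive Dyck tilings. -/
def histories : List DyckStep → ℕ → List ℕ → Finset (List (ℕ × ℕ))
  | [], k, st => if k = 0 ∧ st = [] then {[]} else ∅
  | s :: w, k, st =>
      (stepChoices s k st).biUnion fun c => (histories w c.2 (nextStack s st c.1)).image (c :: ·)

/-- The exponent of `q` of a history, which is the art of the tiling it encodes. -/
def histWeight : List DyckStep → List (ℕ × ℕ) → ℕ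
  | s :: w, c :: l => stepWeight s c + histWeight w l
  | _, _ => 0

/-- The generating function of histories. -/
def weightSum (w : List DyckStep) (k : ℕ) (st : List ℕ) : ℤ[X] :=
  ∑ l ∈ histories w k st, X ^ histWeight w l

theorem mem_stepChoices_up {k : ℕ} {st : List ℕ} {c : ℕ × ℕ} :
    c ∈ stepChoices U k st ↔
      st.headD 0 ≤ c.1 ∧ c.1 ≤ k ∧ c.1 ≤ c.2 ∧ (c.2 = k ∨ c.2 + 1 = k) := by
  simp only [stepChoices, mem_union, mem_product, mem_Ico, mem_singleton]
  omega

theorem mem_stepChoices_down {k : ℕ} {st : List ℕ} {c : ℕ × ℕ} :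
    c ∈ stepChoices D k st ↔
      (∃ st', st = c.1 :: st') ∧ c.1 ≤ k ∧ (c.2 = k ∨ c.2 = k + 1) := by
  obtain - | ⟨v, st⟩ := st
  · simp [stepChoices]
  · by_cases hv : v ≤ k
    · simp only [stepChoices, if_pos hv, mem_insert, mem_singleton, Prod.ext_iff,
        List.cons.injEq, exists_and_left, exists_eq', and_true]
      omega
    · simp only [stepChoices, if_neg hv, notMem_empty, List.cons.injEq, exists_and_left,
        exists_eq', and_true, false_iff]
      omega

theorem nil_mem_histories {k : ℕ} {st : List ℕ} :
    [] ∈ histories [] k st ↔ k = 0 ∧ st = [] := by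
  by_cases h : k = 0 ∧ st = [] <;> simp [histories, h]

theorem cons_mem_histories {s : DyckStep} {w : List DyckStep} {k : ℕ} {st : List ℕ} {c : ℕ × ℕ}
    {l : List (ℕ × ℕ)} :
    c :: l ∈ histories (s :: w) k st ↔
      c ∈ stepChoices s k st ∧ l ∈ histories w c.2 (nextStack s st c.1) := by
  simp only [histories, mem_biUnion, mem_image, List.cons.injEq]
  constructor
  · rintro ⟨c, hc, l, hl, rfl, rfl⟩
    exact ⟨hc, hl⟩
  · rintro ⟨hc, hl⟩
    exact ⟨c, hc, l, hl, rfl, rfl⟩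

theorem exists_cons_of_mem_histories {s : DyckStep} {w : List DyckStep} {k : ℕ} {st : List ℕ}
    {l : List (ℕ × ℕ)} (hl : l ∈ histories (s :: w) k st) : ∃ c l', l = c :: l' := by
  simp only [histories, mem_biUnion, mem_image] at hl
  obtain ⟨c, -, l', -, rfl⟩ := hl
  exact ⟨c, l', rfl⟩

theorem length_of_mem_histories {w : List DyckStep} {k : ℕ} {st : List ℕ} {l : List (ℕ × ℕ)}
    (hl : l ∈ histories w k st) : l.length = w.length := by
  induction w generalizing k st l with
  | nil =>
    simp only [histories] at hl
    split_ifs at hl <;> simp_all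
  | cons s w ih =>
    obtain ⟨c, l, rfl⟩ := exists_cons_of_mem_histories hl
    rw [List.length_cons, List.length_cons, ih (cons_mem_histories.1 hl).2]

theorem two_mul_histWeight {w : List DyckStep} {k : ℕ} {st : List ℕ} {l : List (ℕ × ℕ)}
    (hl : l ∈ histories w k st) :
    2 * histWeight w l + (l.map Prod.fst).sum + st.sum = 2 * (l.map Prod.snd).sum := by
  induction w generalizing k st l with
  | nil =>
    obtain rfl := List.length_eq_zero_iff.1 (length_of_mem_histories hl)
    obtain ⟨-, rfl⟩ := nil_mem_histories.1 hl
    rfl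
  | cons s w ih =>
    obtain ⟨c, l, rfl⟩ := exists_cons_of_mem_histories hl
    obtain ⟨hc, hl⟩ := cons_mem_histories.1 hl
    have hrec := ih hl
    cases s with
    | U =>
      simp only [nextStack, histWeight, stepWeight, List.map_cons, List.sum_cons] at hrec ⊢
      omega
    | D =>
      obtain ⟨⟨st, rfl⟩, hck, hk⟩ := mem_stepChoices_down.1 hc
      simp only [nextStack, histWeight, stepWeight, List.map_cons, List.sum_cons,
        List.tail_cons] at hrec ⊢
      omega

theorem weightSum_cons (s : DyckStep) (w : List DyckStep) (k : ℕ) (st : List ℕ) :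
    weightSum (s :: w) k st =
      ∑ c ∈ stepChoices s k st, X ^ stepWeight s c * weightSum w c.2 (nextStack s st c.1) := by
  have hdisj : (stepChoices s k st : Set (ℕ × ℕ)).PairwiseDisjoint
      fun c => (histories w c.2 (nextStack s st c.1)).image (c :: ·) := by
    refine fun c _ d _ hcd => disjoint_left.2 fun l hlc hld => hcd ?_
    obtain ⟨l₁, -, rfl⟩ := mem_image.1 hlc
    obtain ⟨l₂, -, h⟩ := mem_image.1 hld
    exact (List.cons.inj h).1.symm
  rw [weightSum, histories, sum_biUnion hdisj]
  refine sum_congr rfl fun c _ => ?_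
  rw [sum_image (List.cons_injective.injOn), weightSum, mul_sum]
  exact sum_congr rfl fun l _ => pow_add _ _ _

theorem weightSum_up (w : List DyckStep) (st : List ℕ) (i : ℕ) :
    weightSum (U :: w) (st.headD 0 + i) st =
      X ^ st.headD 0 * upTransfer X (fun e b =>
        weightSum w (st.headD 0 + e + b) ((st.headD 0 + e) :: st)) i := by
  set c := st.headD 0
  have hdisj : Disjoint (Ico c (c + i + 1) ×ˢ {c + i}) (Ico c (c + i) ×ˢ {c + i - 1}) := by
    simp only [disjoint_left, mem_product, mem_Ico, mem_singleton]
    omega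
  rw [weightSum_cons, stepChoices, sum_union hdisj]
  simp only [sum_product, sum_singleton, sum_Ico_eq_sum_range, stepWeight, nextStack,
    add_tsub_cancel_left, add_assoc c i 1, upTransfer, mul_add, mul_sum]
  congr 1 <;> refine sum_congr rfl fun e he => ?_ <;> have hei := mem_range.1 he
  · rw [pow_add, mul_assoc, show c + e + (i - e) = c + i by omega]
  · rw [show c + e + (i - 1 - e) = c + i - 1 by omega, show c + i - 1 = c + (i - 1) by omega,
      pow_add, mul_assoc]

theorem weightSum_down (w : List DyckStep) (st : List ℕ) (v b : ℕ) :
    weightSum (D :: w) (v + b) (v :: st) =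
      X ^ b * weightSum w (v + b) st + X ^ (b + 1) * weightSum w (v + b + 1) st := by
  rw [weightSum_cons, stepChoices, if_pos (Nat.le_add_right v b), sum_pair (by simp)]
  simp only [stepWeight, nextStack, List.tail_cons, add_assoc v b 1, add_tsub_cancel_left]

/-- The product formula along a Dyck word `u`, in the form that survives the recursion: the
umbral functional pairs the completions of a history with `qPochhammer X 0 m`. -/
def SatisfiesProductFormula (u : DyckWord) : Prop :=
  ∀ (w : List DyckStep) (st : List ℕ) (m : ℕ),
    chordProd u.toList *
        umbral (fun i => weightSum (u.toList ++ w) (st.headD 0 + i) st) (qPochhammer X 0 m) =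
      qrise m u.semilength * X ^ (u.semilength * st.headD 0) *
        umbral (fun i => weightSum w (st.headD 0 + i) st) (qPochhammer X 0 (m + u.semilength))

theorem SatisfiesProductFormula.chord {a : DyckWord} (ha : SatisfiesProductFormula a)
    (w : List DyckStep) (st : List ℕ) (e i : ℕ) :
    chordProd a.toList * umbral
        (fun b => weightSum (a.toList ++ D :: w) (st.headD 0 + e + b) ((st.headD 0 + e) :: st))
        (qPochhammer X 0 i) =
      qrise i a.semilength * X ^ (a.semilength * st.headD 0) *
        (X ^ (a.semilength * e) *
          umbral (fun b => weightSum w (st.headD 0 + b) st)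
            (X ^ e * qPochhammer X 0 (i + a.semilength + 1))) := by
  rw [← qPochhammer_comp_mul, ← umbral_shift_add]
  refine (ha (D :: w) ((st.headD 0 + e) :: st) i).trans ?_
  simp only [List.headD_cons, weightSum_down]
  simp only [mul_add, pow_add _ _ (_ * e), mul_assoc, add_assoc]

theorem SatisfiesProductFormula.nest {a : DyckWord} (ha : SatisfiesProductFormula a)
    (w : List DyckStep) (st : List ℕ) (m : ℕ) :
    qint (a.semilength + 1) * chordProd a.toList *
        umbral (fun i => weightSum (U :: (a.toList ++ D :: w)) (st.headD 0 + i) st)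
          (qPochhammer X 0 m) =
      qrise m (a.semilength + 1) * X ^ ((a.semilength + 1) * st.headD 0) *
        umbral (fun i => weightSum w (st.headD 0 + i) st)
          (qPochhammer X 0 (m + (a.semilength + 1))) := by
  have hterm : ∀ i ∈ range (m + 1), chordProd a.toList * (X ^ i * umbral (fun e => umbral
        (fun b => weightSum (a.toList ++ D :: w) (st.headD 0 + e + b) ((st.headD 0 + e) :: st))
        (qPochhammer X 0 i)) (qPochhammer X (i + 1) (m - i))) =
      X ^ i * qrise i a.semilength * (X ^ (a.semilength * st.headD 0) *
        umbral (fun i => weightSum w (st.headD 0 + i) st)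
          (qPochhammer X 0 (m + (a.semilength + 1)))) := by
    intro i hi
    have him : i ≤ m := Nat.lt_succ_iff.1 (mem_range.1 hi)
    have hprod : qPochhammer (X : ℤ[X]) (i + 1 + a.semilength) (m - i) *
        qPochhammer X 0 (i + a.semilength + 1) = qPochhammer X 0 (m + (a.semilength + 1)) := by
      rw [show m + (a.semilength + 1) = i + a.semilength + 1 + (m - i) by omega,
        qPochhammer_add _ _ (_ + 1), mul_comm, zero_add, add_right_comm i 1]
    rw [mul_left_comm, ← umbral_mul_left]
    simp only [ha.chord]
    rw [umbral_mul_left, umbral_umbral_X_pow_mul, qPochhammer_comp, hprod]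
    ring
  simp only [weightSum_up]
  rw [umbral_mul_left, umbral_upTransfer_qPochhammer, mul_left_comm, mul_assoc (qint _), mul_sum,
    sum_congr rfl hterm, ← sum_mul, ← mul_assoc (qint _), qint_mul_sum_qrise]
  ring

theorem satisfiesProductFormula (u : DyckWord) : SatisfiesProductFormula u := by
  induction u using dyckWord_induction with
  | zero =>
    intro w st m
    change 1 * _ = qrise m 0 * X ^ (0 * _) * _
    rw [qrise, prod_range_zero, zero_mul, pow_zero, one_mul, one_mul, one_mul]
    rfl
  | nest_add a b ha hb =>
    intro w st m
    rw [chordProd_nest_add, mul_right_comm, toList_nest_add, List.cons_append, List.append_assoc,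
      List.cons_append, ha.nest, mul_right_comm, mul_assoc, hb,
      DyckWord.semilength_add, DyckWord.semilength_nest, qrise_add _ (_ + 1), add_mul,
      pow_add, add_assoc m]
    ring

theorem weightSum_mul_chordProd (u : DyckWord) :
    weightSum u.toList 0 [] * chordProd u.toList = qfact u.semilength := by
  have hprod := satisfiesProductFormula u [] [] 0
  have hend : ∀ f, umbral (fun i => weightSum [] i []) f = f.eval 0 := by
    intro f
    induction f using Polynomial.induction_on' with
    | add f₁ f₂ h₁ h₂ => rw [map_add, h₁, h₂, eval_add]
    | monomial i a =>
      rw [umbral_monomial, eval_monomial]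
      cases i <;> simp [weightSum, histories, histWeight]
  have heval : (qPochhammer (X : ℤ[X]) 0 u.semilength).eval 0 = 1 := by
    simp [qPochhammer, eval_prod]
  simpa [qPochhammer_zero, umbral_one, hend, heval, qrise_zero_left, mul_comm] using hprod

variable {n : ℕ}

/-! ### Height functions -/

/-- The height functions of Dyck paths of order `n`, extended by zero outside `[-n, n]`. -/
structure IsDyckHeight (n : ℕ) (h : ℤ → ℤ) : Prop where
  step : ∀ x, -(n : ℤ) ≤ x → x < n → h (x + 1) = h x + 1 ∨ h (x + 1) = h x - 1
  eq_zero_of_le : ∀ x ≤ -(n : ℤ), h x = 0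
  eq_zero_of_ge : ∀ x ≥ (n : ℤ), h x = 0
  nonneg : ∀ x, 0 ≤ h x

namespace IsDyckHeight

variable {h : ℤ → ℤ}

theorem parity (hh : IsDyckHeight n h) {x : ℤ} (hx : -(n : ℤ) ≤ x) (hxn : x ≤ n) :
    (h x - x - n) % 2 = 0 := by
  induction x, hx using Int.leInduction with
  | base => simp [hh.eq_zero_of_le _ le_rfl]
  | succ x hx ih =>
    have hpar := ih (by omega)
    obtain hs | hs := hh.step x hx (by omega) <;> omega

theorem le_add_one (hh : IsDyckHeight n h) (x : ℤ) : h (x + 1) ≤ h x + 1 ∧ h x ≤ h (x + 1) + 1 := by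
  by_cases hx : -(n : ℤ) ≤ x
  · by_cases hxn : x < n
    · obtain hs | hs := hh.step x hx hxn <;> omega
    · have hzero := hh.eq_zero_of_ge x (by omega)
      have hzero' := hh.eq_zero_of_ge (x + 1) (by omega)
      omega
  · have hzero := hh.eq_zero_of_le x (by omega)
    have hzero' := hh.eq_zero_of_le (x + 1) (by omega)
    omega

end IsDyckHeight

/-- The height at column `x` of an arbitrary word of `2n` up and down steps from `(-n, 0)`. -/
def stepHeight (s : Fin (2 * n) → Bool) (x : ℤ) : ℤ :=
  ((univ.filter fun i : Fin (2 * n) => ((i : ℕ) : ℤ) < x + n ∧ s i = true).card : ℤ) -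
    ((univ.filter fun i : Fin (2 * n) => ((i : ℕ) : ℤ) < x + n ∧ s i = false).card : ℤ)

theorem stepHeight_eq_sum (s : Fin (2 * n) → Bool) (x : ℤ) :
    stepHeight s x =
      ∑ i ∈ univ.filter (fun i : Fin (2 * n) => ((i : ℕ) : ℤ) < x + n),
        if s i = true then 1 else -1 := by
  rw [stepHeight, ← filter_filter, ← filter_filter, sum_ite, sum_const, sum_const]
  simp [sub_eq_add_neg]

theorem stepHeight_add_one (s : Fin (2 * n) → Bool) {x : ℤ} (hx : -(n : ℤ) ≤ x) (hxn : x < n) :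
    stepHeight s (x + 1) =
      stepHeight s x + if s ⟨(x + n).toNat, by omega⟩ = true then 1 else -1 := by
  have hinsert : (univ.filter fun i : Fin (2 * n) => ((i : ℕ) : ℤ) < x + 1 + n) =
      insert ⟨(x + n).toNat, by omega⟩
        (univ.filter fun i : Fin (2 * n) => ((i : ℕ) : ℤ) < x + n) := by
    ext i
    simp only [mem_filter, mem_univ, true_and, mem_insert, Fin.ext_iff]
    omega
  rw [stepHeight_eq_sum, stepHeight_eq_sum, hinsert, sum_insert (by simp), add_comm]

theorem stepHeight_of_le (s : Fin (2 * n) → Bool) {x : ℤ} (hx : x ≤ -n) : stepHeight s x = 0 := by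
  rw [stepHeight_eq_sum, filter_false_of_mem fun i _ => by omega, sum_empty]

theorem stepHeight_of_ge (s : Fin (2 * n) → Bool) {x : ℤ} (hx : n ≤ x) :
    stepHeight s x = 2 * (univ.filter fun i => s i = true).card - 2 * n := by
  have hcard := card_filter_add_card_filter_not (s := (univ : Finset (Fin (2 * n))))
    fun i => s i = true
  have hlt : ∀ i : Fin (2 * n), ((i : ℕ) : ℤ) < x + n := fun i => by omega
  simp only [Bool.not_eq_true, card_univ, Fintype.card_fin] at hcard
  simp only [stepHeight, hlt, true_and]
  omega

theorem ht_add_one (P : DyckPath n) {x : ℤ} (hx : -(n : ℤ) ≤ x) (hxn : x < n) :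
    P.ht (x + 1) = P.ht x + if P.step ⟨(x + n).toNat, by omega⟩ = true then 1 else -1 :=
  stepHeight_add_one P.step hx hxn

theorem step_eq_true_iff (P : DyckPath n) (i : Fin (2 * n)) :
    P.step i = true ↔ P.ht ((i : ℕ) - n) < P.ht ((i : ℕ) - n + 1) := by
  rw [ht_add_one P (x := (i : ℕ) - n) (by omega) (by omega)]
  simp only [sub_add_cancel, Int.toNat_natCast, Fin.eta]
  split_ifs with h <;> simp [h]

theorem ht_nonneg (P : DyckPath n) (x : ℤ) : 0 ≤ P.ht x := by
  have hnonneg := P.nonneg (min (x + n).toNat (2 * n)) (min_le_right _ _)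
  have hlt : ∀ i : Fin (2 * n), (i : ℕ) < min (x + n).toNat (2 * n) ↔ ((i : ℕ) : ℤ) < x + n :=
    fun i => by omega
  simp only [hlt] at hnonneg
  rw [DyckPath.ht]
  omega

theorem isDyckHeight_ht (P : DyckPath n) : IsDyckHeight n P.ht where
  step x hx hxn := by
    rw [ht_add_one P hx hxn]
    split_ifs <;> simp [sub_eq_add_neg]
  eq_zero_of_le _ hx := stepHeight_of_le P.step hx
  eq_zero_of_ge _ hx := by
    refine (stepHeight_of_ge P.step hx).trans ?_
    rw [P.balanced, sub_self]
  nonneg := ht_nonneg P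

theorem ht_le (P : DyckPath n) (x : ℤ) : P.ht x ≤ n := by
  have hups : (univ.filter fun i : Fin (2 * n) => ((i : ℕ) : ℤ) < x + n ∧ P.step i = true).card ≤
      (univ.filter fun i => P.step i = true).card :=
    card_le_card (monotone_filter_right _ fun _ _ hi => hi.2)
  rw [P.balanced] at hups
  rw [DyckPath.ht]
  omega

theorem ht_injective : Function.Injective (DyckPath.ht : DyckPath n → ℤ → ℤ) := by
  intro P Q h
  have hs : P.step = Q.step := by
    funext i
    rw [Bool.eq_iff_iff, step_eq_true_iff, step_eq_true_iff, h]
  cases P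
  cases Q
  congr

theorem stepHeight_eq_of_isDyckHeight {f : ℤ → ℤ} (hf : IsDyckHeight n f) {x : ℤ}
    (hx : -(n : ℤ) ≤ x) (hxn : x ≤ n) :
    stepHeight (fun i : Fin (2 * n) => decide (f ((i : ℕ) - n) < f ((i : ℕ) - n + 1))) x = f x := by
  induction x, hx using Int.leInduction with
  | base => rw [hf.eq_zero_of_le _ le_rfl, stepHeight_of_le _ le_rfl]
  | succ x hx ih =>
    have hcast : ((x + n).toNat : ℤ) - n = x := by omega
    rw [stepHeight_add_one _ hx (by omega), ih (by omega)]
    simp only [hcast, decide_eq_true_eq]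
    obtain h | h := hf.step x hx (by omega) <;> split_ifs <;> omega

theorem exists_ht_eq {f : ℤ → ℤ} (hf : IsDyckHeight n f) : ∃ P : DyckPath n, P.ht = f := by
  let s : Fin (2 * n) → Bool := fun i => decide (f ((i : ℕ) - n) < f ((i : ℕ) - n + 1))
  have hmid : ∀ x, -(n : ℤ) ≤ x → x ≤ n → stepHeight s x = f x := fun x =>
    stepHeight_eq_of_isDyckHeight hf
  have hbalanced : (univ.filter fun i => s i = true).card = n := by
    have hend := hmid n (by omega) le_rfl
    rw [hf.eq_zero_of_ge _ le_rfl, stepHeight_of_ge s le_rfl] at hend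
    omega
  have hnonneg : ∀ k : ℕ, k ≤ 2 * n →
      (univ.filter fun i : Fin (2 * n) => (i : ℕ) < k ∧ s i = false).card ≤
        (univ.filter fun i : Fin (2 * n) => (i : ℕ) < k ∧ s i = true).card := by
    intro k hk
    have hpos := hf.nonneg (k - n)
    rw [← hmid (k - n) (by omega) (by omega), stepHeight] at hpos
    simp only [sub_add_cancel, Nat.cast_lt] at hpos
    omega
  let P : DyckPath n := ⟨s, hbalanced, hnonneg⟩
  have hP := isDyckHeight_ht P
  refine ⟨P, funext fun x => ?_⟩
  by_cases hx : -(n : ℤ) ≤ x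
  · by_cases hxn : x ≤ n
    · exact hmid x hx hxn
    · rw [hP.eq_zero_of_ge x (by omega), hf.eq_zero_of_ge x (by omega)]
  · rw [hP.eq_zero_of_le x (by omega), hf.eq_zero_of_le x (by omega)]

/-! ### Step words and the chords of a path -/

section Sample

variable {α : Type*}

/-- The list of the values `f x, f (x + 1), …, f (x + r - 1)`. -/
def sample (f : ℤ → α) : ℕ → ℤ → List α
  | 0, _ => []
  | r + 1, x => f x :: sample f r (x + 1)

theorem length_sample (f : ℤ → α) (r : ℕ) (x : ℤ) : (sample f r x).length = r := by
  induction r generalizing x with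
  | zero => rfl
  | succ r ih => rw [sample, List.length_cons, ih]

theorem sample_add (f : ℤ → α) (r s : ℕ) (x : ℤ) :
    sample f (r + s) x = sample f r x ++ sample f s (x + r) := by
  induction r generalizing x with
  | zero => simp [sample]
  | succ r ih =>
    rw [add_right_comm, sample, sample, ih, List.cons_append, Nat.cast_succ, add_assoc x,
      add_comm (1 : ℤ)]

theorem take_sample (f : ℤ → α) (i r : ℕ) (x : ℤ) :
    (sample f r x).take i = sample f (min i r) x := by
  obtain hir | hri := le_total i r
  · obtain ⟨s, rfl⟩ := Nat.exists_eq_add_of_le hir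
    rw [sample_add, List.take_left' (length_sample f i x), min_eq_left hir]
  · rw [List.take_of_length_le (by rwa [length_sample]), min_eq_right hri]

theorem map_sample {β : Type*} (g : α → β) (f : ℤ → α) (r : ℕ) (x : ℤ) :
    (sample f r x).map g = sample (g ∘ f) r x := by
  induction r generalizing x with
  | zero => rfl
  | succ r ih => rw [sample, List.map_cons, ih, sample, Function.comp_apply]

theorem sum_sample (f : ℤ → ℕ) (r : ℕ) (x : ℤ) :
    (sample f r x).sum = ∑ y ∈ Ico x (x + r), f y := by
  induction r generalizing x with
  | zero => simp [sample]
  | succ r ih =>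
    rw [sample, List.sum_cons, ih, ← insert_Ico_add_one_left_eq_Ico (a := x) (by omega),
      sum_insert (by simp), Nat.cast_succ, add_assoc x, add_comm (1 : ℤ)]

theorem sample_eq_sample_iff {f g : ℤ → α} {r : ℕ} {x : ℤ} :
    sample f r x = sample g r x ↔ ∀ y, x ≤ y → y < x + r → f y = g y := by
  induction r generalizing x with
  | zero => exact ⟨fun _ y _ _ => by omega, fun _ => rfl⟩
  | succ r ih =>
    rw [sample, sample, List.cons.injEq, ih]
    refine ⟨fun H y hxy hy => ?_, fun H => ⟨H x le_rfl (by omega),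
      fun y hxy hy => H y (by omega) (by omega)⟩⟩
    obtain rfl | hlt := hxy.eq_or_lt
    · exact H.1
    · exact H.2 y hlt (by omega)

theorem exists_sample_eq [Inhabited α] (l : List α) (x : ℤ) :
    ∃ f : ℤ → α, sample f l.length x = l ∧ ∀ y, y < x ∨ x + l.length ≤ y → f y = default := by
  induction l generalizing x with
  | nil => exact ⟨fun _ => default, rfl, fun _ _ => rfl⟩
  | cons a l ih =>
    obtain ⟨f, hf, hdefault⟩ := ih (x + 1)
    refine ⟨Function.update f x a, ?_, fun y hy => ?_⟩
    · rw [List.length_cons, sample, Function.update_self]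
      refine congrArg (a :: ·) (Eq.trans ?_ hf)
      exact sample_eq_sample_iff.2 fun y hxy _ => Function.update_of_ne (by omega) _ _
    · rw [List.length_cons] at hy
      rw [Function.update_of_ne (by omega), hdefault y (by omega)]

end Sample

/-- The word of the steps of a height function over the `r` columns following `x`. -/
def stepWord (h : ℤ → ℤ) (r : ℕ) (x : ℤ) : List DyckStep :=
  sample (fun y => if h y < h (y + 1) then U else D) r x

/-- The columns in `[x, z)` over which `h` steps up. -/
def upSteps (h : ℤ → ℤ) (x z : ℤ) : Finset ℤ := (Ico x z).filter fun y => h y < h (y + 1)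

section StepWord

variable {h : ℤ → ℤ} {r : ℕ} {x : ℤ}

theorem count_U_stepWord (h : ℤ → ℤ) (r : ℕ) (x : ℤ) :
    (stepWord h r x).count U = #(upSteps h x (x + r)) := by
  rw [upSteps, card_filter, ← sum_sample, stepWord]
  induction r generalizing x with
  | zero => rfl
  | succ r ih =>
    rw [sample, sample, List.count_cons, ih, List.sum_cons, add_comm]
    split_ifs <;> simp_all

theorem count_U_sub_count_D_stepWord
    (hstep : ∀ y, x ≤ y → y < x + r → h (y + 1) = h y + 1 ∨ h (y + 1) = h y - 1) :
    ((stepWord h r x).count U : ℤ) - (stepWord h r x).count D = h (x + r) - h x := by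
  induction r generalizing x with
  | zero => simp [stepWord, sample]
  | succ r ih =>
    push_cast at hstep ⊢
    have hrec := ih (x := x + 1) fun y _ _ => hstep y (by omega) (by omega)
    rw [add_right_comm, add_assoc x] at hrec
    rw [stepWord] at hrec ⊢
    obtain hs | hs := hstep x le_rfl (by omega)
    · rw [sample, if_pos (by omega), List.count_cons_self,
        List.count_cons_of_ne (show U ≠ D from nofun)]
      omega
    · rw [sample, if_neg (by omega), List.count_cons_self,
        List.count_cons_of_ne (show D ≠ U from nofun)]
      omega

theorem exists_dyckWord_toList_eq_stepWord
    (hstep : ∀ y, x ≤ y → y < x + r → h (y + 1) = h y + 1 ∨ h (y + 1) = h y - 1)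
    (hreturn : h (x + r) = h x) (hmin : ∀ y, x ≤ y → y ≤ x + r → h x ≤ h y) :
    ∃ u : DyckWord, u.toList = stepWord h r x := by
  refine ⟨⟨stepWord h r x, ?_, fun i => ?_⟩, rfl⟩
  · have hcount := count_U_sub_count_D_stepWord hstep
    omega
  · have hcount := count_U_sub_count_D_stepWord (r := min i r) fun y hy hyr =>
      hstep y hy (by omega)
    have hle := hmin (x + (min i r : ℕ)) (by omega) (by omega)
    rw [stepWord, take_sample, ← stepWord]
    omega

theorem IsDyckHeight.exists_dyckWord (hh : IsDyckHeight n h) :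
    ∃ u : DyckWord, u.toList = stepWord h (2 * n) (-n) ∧ u.semilength = n := by
  have hend : -(n : ℤ) + (2 * n : ℕ) = n := by push_cast; ring
  have hzero := hh.eq_zero_of_le _ le_rfl
  obtain ⟨u, hu⟩ := exists_dyckWord_toList_eq_stepWord (h := h) (r := 2 * n) (x := -n)
    (fun y hy hyn => hh.step y hy (by omega))
    (by rw [hend, hzero, hh.eq_zero_of_ge _ le_rfl]) fun y _ _ => hzero ▸ hh.nonneg y
  refine ⟨u, hu, ?_⟩
  have hlen := u.two_mul_semilength_eq_length
  rw [hu, stepWord, length_sample] at hlen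
  omega

theorem IsDyckHeight.card_upSteps (hh : IsDyckHeight n h) : #(upSteps h (-n) n) = n := by
  obtain ⟨u, hu, hn⟩ := hh.exists_dyckWord
  have hcount := count_U_stepWord h (2 * n) (-n)
  rw [← hu, show -(n : ℤ) + (2 * n : ℕ) = n by push_cast; ring] at hcount
  exact hcount.symm.trans hn

theorem upsBeforeReturn_stepWord {p q N : ℤ} (hpq : p < q) (hqN : q < N)
    (hstep : ∀ y, p ≤ y → y < q → h (y + 1) = h y + 1 ∨ h (y + 1) = h y - 1)
    (hdown : h (q + 1) = h p) (habove : ∀ y, p < y → y ≤ q → h p < h y)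
    (hup : h (p + 1) = h p + 1) (hq : h q = h (q + 1) + 1) :
    upsBeforeReturn 0 (stepWord h (N - (p + 1)).toNat (p + 1)) + 1 = #(upSteps h p (q + 1)) := by
  have hr : p + 1 + (q - (p + 1)).toNat = q := by omega
  obtain ⟨u, hu⟩ := exists_dyckWord_toList_eq_stepWord (h := h) (r := (q - (p + 1)).toNat)
    (x := p + 1) (fun y _ _ => hstep y (by omega) (by omega)) (by rw [hr]; omega)
    fun y hy hyq => (Int.add_one_le_of_lt (habove y (by omega) (by omega))).trans' hup.le
  have hsplit : stepWord h (N - (p + 1)).toNat (p + 1) =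
      u.toList ++ D :: stepWord h (N - (q + 1)).toNat (q + 1) := by
    rw [hu, show (N - (p + 1)).toNat = (q - (p + 1)).toNat + ((N - (q + 1)).toNat + 1) by omega,
      stepWord, sample_add, hr, sample, if_neg (by omega)]
    rfl
  have hsemi : u.semilength = #(upSteps h (p + 1) q) := by
    have hcount := count_U_stepWord h (q - (p + 1)).toNat (p + 1)
    rwa [hr, ← hu] at hcount
  have hups : upSteps h p (q + 1) = insert p (upSteps h (p + 1) q) := by
    ext y
    simp only [upSteps, mem_filter, mem_Ico, mem_insert]
    constructor
    · rintro ⟨hy, hlt⟩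
      obtain rfl | hne := eq_or_ne y q <;> omega
    · rintro (rfl | hy) <;> omega
  rw [hsplit, upsBeforeReturn_append, upsBeforeReturn, add_zero, hsemi, hups,
    card_insert_of_notMem (by simp [upSteps])]

theorem chordProd_stepWord (h : ℤ → ℤ) {x N : ℤ} (hxN : x ≤ N) :
    chordProd (stepWord h (N - x).toNat x) =
      ∏ y ∈ upSteps h x N,
        qint (upsBeforeReturn 0 (stepWord h (N - (y + 1)).toNat (y + 1)) + 1) := by
  obtain ⟨r, hr⟩ := Int.eq_ofNat_of_zero_le (sub_nonneg.mpr hxN)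
  induction r generalizing x with
  | zero =>
    obtain rfl : x = N := by omega
    simp [stepWord, sample, chordProd, upSteps]
  | succ r ih =>
    have htail : (N - (x + 1)).toNat = r := by omega
    have hword : stepWord h (N - x).toNat x =
        (if h x < h (x + 1) then U else D) :: stepWord h (N - (x + 1)).toNat (x + 1) := by
      rw [htail, show (N - x).toNat = r + 1 by omega]
      rfl
    rw [hword, upSteps, ← insert_Ico_add_one_left_eq_Ico (by omega : x < N), filter_insert]
    split_ifs with hup
    · rw [chordProd, ih (by omega) (by omega), prod_insert (by simp), upSteps]
    · rw [chordProd, ih (by omega) (by omega), upSteps]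

end StepWord

section ChordLabeling

variable {lam : DyckPath n} (C : ChordLabeling lam)

theorem chordLen_eq_card (i : Fin n) :
    chordLen C i = #(upSteps lam.ht ((C.l i : ℤ) - n) ((C.r i : ℤ) - n + 1)) := by
  have hr : C.r i < 2 * n := (C.chord i).2.1
  rw [chordLen]
  refine card_bij (fun m _ => ((m : ℕ) : ℤ) - n) (fun m hm => ?_) (fun m _ m' _ h => ?_)
    fun y hy => ?_
  · rw [mem_filter, step_eq_true_iff] at hm
    rw [upSteps, mem_filter, mem_Ico]
    omega
  · exact Fin.ext (by omega)
  · rw [upSteps, mem_filter, mem_Ico] at hy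
    have hcast : ((y + n).toNat : ℤ) - n = y := by omega
    refine ⟨⟨(y + n).toNat, by omega⟩, ?_, hcast⟩
    rw [mem_filter, step_eq_true_iff]
    simp only [mem_univ, true_and, hcast]
    omega

theorem image_left_endpoints_eq_upSteps :
    univ.image (fun i => (C.l i : ℤ) - n) = upSteps lam.ht (-n) n := by
  have hinj : Function.Injective fun i => (C.l i : ℤ) - n := fun i j h =>
    C.inj (by simp only at h; omega)
  refine eq_of_subset_of_card_le (image_subset_iff.mpr fun i _ => ?_) ?_
  · obtain ⟨_, _, ⟨hl, hup⟩, _⟩ := C.chord i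
    rw [step_eq_true_iff] at hup
    rw [upSteps, mem_filter, mem_Ico]
    exact ⟨by omega, hup⟩
  · rw [card_image_of_injective _ hinj, card_univ, Fintype.card_fin,
      (isDyckHeight_ht lam).card_upSteps]

theorem upsBeforeReturn_eq_chordLen (i : Fin n) :
    upsBeforeReturn 0
        (stepWord lam.ht (n - ((C.l i : ℤ) - n + 1)).toNat ((C.l i : ℤ) - n + 1)) + 1 =
      chordLen C i := by
  obtain ⟨hlr, hr, ⟨_, hup⟩, ⟨_, hdown⟩, hreturn, habove⟩ := C.chord i
  have hh := isDyckHeight_ht lam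
  rw [step_eq_true_iff] at hup
  rw [← Bool.not_eq_true, step_eq_true_iff] at hdown
  simp only [DyckPath.pt, Nat.cast_add, Nat.cast_one] at hreturn habove
  rw [chordLen_eq_card]
  refine upsBeforeReturn_stepWord (by omega) (by omega)
    (fun y _ _ => hh.step y (by omega) (by omega)) (by rwa [sub_add_eq_add_sub])
    (fun y hy hyq => ?_) ?_ ?_
  · have hcast : ((y + n).toNat : ℤ) - n = y := by omega
    simpa only [hcast] using habove (y + n).toNat (by omega) (by omega)
  · obtain hs | hs := hh.step ((C.l i : ℤ) - n) (by omega) (by omega)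
    · exact hs
    · simp only at hup
      omega
  · obtain hs | hs := hh.step ((C.r i : ℤ) - n) (by omega) (by omega)
    · simp only at hdown
      omega
    · omega

theorem prod_qint_chordLen :
    ∏ i : Fin n, qint (chordLen C i) = chordProd (stepWord lam.ht (2 * n) (-n)) := by
  have hprod := chordProd_stepWord lam.ht (x := -n) (N := n) (by omega)
  rw [show ((n : ℤ) - -n).toNat = 2 * n by omega, ← image_left_endpoints_eq_upSteps C,
    prod_image fun i _ j _ h => C.inj (by omega)] at hprod
  rw [hprod]
  exact prod_congr rfl fun i _ => by rw [upsBeforeReturn_eq_chordLen]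

end ChordLabeling

/-! ### Histories as functions of the columns -/

section Columns

variable {h : ℤ → ℤ} {k j : ℤ → ℕ}

/-- The up step of `h` after column `p` is the innermost one that is still open at column `x`. -/
structure IsOpener (h : ℤ → ℤ) (p x : ℤ) : Prop where
  lt : p < x
  height : h p + 1 = h x
  above : ∀ z, p < z → z ≤ x → h p < h z

theorem IsOpener.eq {p p' x : ℤ} (hp : IsOpener h p x) (hp' : IsOpener h p' x) : p = p' := by
  have hheight := hp.height
  have hheight' := hp'.height
  obtain hlt | heq | hlt := lt_trichotomy p p'
  · have := hp.above p' hlt hp'.lt.le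
    omega
  · exact heq
  · have := hp'.above p hlt hp.lt.le
    omega

theorem isOpener_of_up {x : ℤ} (hup : h (x + 1) = h x + 1) : IsOpener h x (x + 1) where
  lt := by omega
  height := hup.symm
  above z hz hz' := by
    obtain rfl : z = x + 1 := by omega
    omega

theorem IsOpener.of_return {p x y : ℤ} (hp : IsOpener h p x) (hxy : x ≤ y) (hreturn : h y = h x)
    (hmin : ∀ z, x < z → z ≤ y → h x ≤ h z) : IsOpener h p y where
  lt := hp.lt.trans_le hxy
  height := hp.height.trans hreturn.symm
  above z hz hzy := by
    have hheight := hp.height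
    obtain hzx | hxz := le_or_gt z x
    · exact hp.above z hz hzx
    · have := hmin z hxz hzy
      omega

theorem IsDyckHeight.not_isOpener_of_eq_zero (hh : IsDyckHeight n h) {p x : ℤ} (hx : h x = 0) :
    ¬IsOpener h p x := fun hp => by
  have hnonneg := hh.nonneg p
  have hheight := hp.height
  omega

theorem IsDyckHeight.exists_isOpener (hh : IsDyckHeight n h) {x y : ℤ} (hxy : x < y)
    (hlt : h x < h y) : ∃ p, x ≤ p ∧ IsOpener h p y := by
  obtain ⟨p, ⟨hpy, hp⟩, hmax⟩ :=
    Int.exists_greatest_of_bdd (P := fun z => z < y ∧ h z < h y) ⟨y, fun z hz => hz.1.le⟩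
      ⟨x, hxy, hlt⟩
  have habove : ∀ z, p < z → z ≤ y → h y ≤ h z := fun z hpz hzy => by
    obtain rfl | hne := eq_or_ne z y
    · exact le_rfl
    · by_contra! hz
      exact absurd (hmax z ⟨by omega, hz⟩) (by omega)
  have hstep := (hh.le_add_one p).1
  have hnext := habove (p + 1) (by omega) (by omega)
  exact ⟨p, hmax x ⟨hxy, hlt⟩, hpy, by omega, fun z hpz hzy => hp.trans_le (habove z hpz hzy)⟩

/-- The stack `st` lists the values of `j` at the up steps of `h` open at a column, innermost
first. -/
inductive IsOpenStack (h : ℤ → ℤ) (j : ℤ → ℕ) : ℤ → List ℕ → Prop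
  | nil {x : ℤ} : h x = 0 → IsOpenStack h j x []
  | cons {p x : ℤ} {st : List ℕ} :
      IsOpener h p x → IsOpenStack h j p st → IsOpenStack h j x (j p :: st)

namespace IsOpenStack

variable {p x : ℤ} {st : List ℕ}

theorem of_return (hst : IsOpenStack h j x st) {y : ℤ} (hxy : x ≤ y) (hreturn : h y = h x)
    (hmin : ∀ z, x < z → z ≤ y → h x ≤ h z) : IsOpenStack h j y st := by
  cases hst with
  | nil hzero => exact .nil (hreturn.trans hzero)
  | cons hp hst => exact .cons (hp.of_return hxy hreturn hmin) hst

theorem up (hst : IsOpenStack h j x st) (hup : h (x + 1) = h x + 1) :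
    IsOpenStack h j (x + 1) (j x :: st) :=
  .cons (isOpener_of_up hup) hst

theorem down (hp : IsOpener h p x) (hst : IsOpenStack h j p st) (hdown : h (x + 1) = h x - 1) :
    IsOpenStack h j (x + 1) st := by
  have hlt := hp.lt
  have hheight := hp.height
  refine hst.of_return (by omega) (by omega) fun z hz hzx => ?_
  obtain rfl | hne := eq_or_ne z (x + 1)
  · omega
  · exact (hp.above z hz (by omega)).le

theorem exists_eq_cons (hh : IsDyckHeight n h) (hst : IsOpenStack h j x st)
    (hp : IsOpener h p x) : ∃ st', st = j p :: st' ∧ IsOpenStack h j p st' := by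
  cases hst with
  | nil hzero => exact (hh.not_isOpener_of_eq_zero hzero hp).elim
  | cons hp' hst =>
    obtain rfl := hp'.eq hp
    exact ⟨_, rfl, hst⟩

theorem eq_nil (hh : IsDyckHeight n h) (hst : IsOpenStack h j x st) (hx : h x = 0) : st = [] := by
  cases hst with
  | nil => rfl
  | cons hp => exact (hh.not_isOpener_of_eq_zero hx hp).elim

theorem headD_le_iff (hh : IsDyckHeight n h) (hst : IsOpenStack h j x st) {m : ℕ} :
    st.headD 0 ≤ m ↔ ∀ p, IsOpener h p x → j p ≤ m := by
  constructor
  · intro hle p hp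
    obtain ⟨st', rfl, -⟩ := hst.exists_eq_cons hh hp
    exact hle
  · intro hle
    cases hst with
    | nil => exact Nat.zero_le m
    | cons hp => exact hle _ hp

end IsOpenStack

/-- The conditions on the numbers `k` of tiles over the columns and `j` of tiles crossing the
steps that make `(j y, k (y + 1))` an admissible record of the step of `h` after column `y`. -/
structure IsHistoryStep (h : ℤ → ℤ) (k j : ℤ → ℕ) (y : ℤ) : Prop where
  le_left : j y ≤ k y
  le_right : j y ≤ k (y + 1)
  up : h (y + 1) = h y + 1 → k (y + 1) = k y ∨ k (y + 1) + 1 = k y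
  down : h (y + 1) = h y - 1 → k (y + 1) = k y ∨ k (y + 1) = k y + 1
  opener_le : ∀ p, IsOpener h p y → j p ≤ j y
  le_opener : ∀ p, IsOpener h p y → h (y + 1) = h y - 1 → j y ≤ j p

/-- The tile counts `k` over the columns and `j` across the steps form a history along the Dyck
path of order `n` with heights `h`. -/
structure IsHistory (n : ℕ) (h : ℤ → ℤ) (k j : ℤ → ℕ) : Prop where
  columns_of_le : ∀ x ≤ -(n : ℤ), k x = 0
  columns_of_ge : ∀ x ≥ (n : ℤ), k x = 0
  step : ∀ y, IsHistoryStep h k j y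

/-- The records `(j y, k (y + 1))` of the `r` steps following column `x`. -/
def record (k j : ℤ → ℕ) (r : ℕ) (x : ℤ) : List (ℕ × ℕ) :=
  sample (fun y => (j y, k (y + 1))) r x

theorem mem_stepChoices_up_iff (hh : IsDyckHeight n h) {x : ℤ} {st : List ℕ}
    (hst : IsOpenStack h j x st) (hup : h (x + 1) = h x + 1) :
    (j x, k (x + 1)) ∈ stepChoices U (k x) st ↔ IsHistoryStep h k j x := by
  rw [mem_stepChoices_up, hst.headD_le_iff hh]
  constructor
  · rintro ⟨hopener, hleft, hright, hk⟩
    refine ⟨hleft, hright, fun _ => hk, fun hdown => ?_, hopener, fun _ _ hdown => ?_⟩ <;> omega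
  · exact fun hx => ⟨hx.opener_le, hx.le_left, hx.le_right, hx.up hup⟩

theorem mem_stepChoices_down_iff {p x : ℤ} {st : List ℕ} (hp : IsOpener h p x)
    (hdown : h (x + 1) = h x - 1) :
    (j x, k (x + 1)) ∈ stepChoices D (k x) (j p :: st) ↔ IsHistoryStep h k j x := by
  simp only [mem_stepChoices_down, List.cons.injEq, exists_and_left, exists_eq', and_true]
  constructor
  · rintro ⟨heq, hleft, hk⟩
    refine ⟨hleft, by omega, fun hup => by omega, fun _ => hk, fun p' hp' => ?_, fun p' hp' _ => ?_⟩
    all_goals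
      obtain rfl := hp.eq hp'
      omega
  · exact fun hx => ⟨(hx.opener_le p hp).antisymm (hx.le_opener p hp hdown), hx.le_left,
      hx.down hdown⟩

theorem record_mem_histories_iff (hh : IsDyckHeight n h) {r : ℕ} {x : ℤ} {st : List ℕ}
    (hx : -(n : ℤ) ≤ x) (hr : x + r = n) (hst : IsOpenStack h j x st) :
    record k j r x ∈ histories (stepWord h r x) (k x) st ↔
      k n = 0 ∧ ∀ y, x ≤ y → y < n → IsHistoryStep h k j y := by
  induction r generalizing x st with
  | zero =>
    obtain rfl : x = n := by simpa using hr
    obtain rfl := hst.eq_nil hh (hh.eq_zero_of_ge _ le_rfl)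
    refine nil_mem_histories.trans ⟨fun hk => ⟨hk.1, fun y _ _ => by omega⟩, fun hk => ⟨hk.1, rfl⟩⟩
  | succ r ih =>
    have hrec := fun {st : List ℕ} => ih (x := x + 1) (st := st) (by omega) (by omega)
    have hforall : (∀ y, x ≤ y → y < n → IsHistoryStep h k j y) ↔
        IsHistoryStep h k j x ∧ ∀ y, x + 1 ≤ y → y < n → IsHistoryStep h k j y := by
      refine ⟨fun H => ⟨H x le_rfl (by omega), fun y hy => H y (by omega)⟩, fun H y hy => ?_⟩
      obtain rfl | hlt := hy.eq_or_lt
      · exact fun _ => H.1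
      · exact H.2 y hlt
    rw [hforall, and_left_comm, record, stepWord, sample, sample, cons_mem_histories]
    obtain hup | hdown := hh.step x hx (by omega)
    · rw [if_pos (by omega), mem_stepChoices_up_iff hh hst hup]
      exact and_congr_right fun _ => hrec (hst.up hup)
    · cases hst with
      | nil hzero =>
        have := hh.nonneg (x + 1)
        omega
      | cons hp hst =>
        rw [if_neg (by omega), mem_stepChoices_down_iff hp hdown]
        exact and_congr_right fun _ => hrec (hst.down hp hdown)

theorem record_mem_histories (hh : IsDyckHeight n h) (H : IsHistory n h k j) :
    record k j (2 * n) (-n) ∈ histories (stepWord h (2 * n) (-n)) 0 [] := by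
  rw [← H.columns_of_le (-n) le_rfl,
    record_mem_histories_iff hh le_rfl (by push_cast; ring) (.nil (hh.eq_zero_of_le _ le_rfl))]
  exact ⟨H.columns_of_ge n le_rfl, fun y _ _ => H.step y⟩

theorem isHistory_of_record_mem_histories (hh : IsDyckHeight n h)
    (hk : ∀ x, x ≤ -(n : ℤ) ∨ n < x → k x = 0) (hj : ∀ x, x < -(n : ℤ) ∨ n ≤ x → j x = 0)
    (hmem : record k j (2 * n) (-n) ∈ histories (stepWord h (2 * n) (-n)) 0 []) :
    IsHistory n h k j := by
  rw [← hk (-n) (.inl le_rfl),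
    record_mem_histories_iff hh le_rfl (by push_cast; ring) (.nil (hh.eq_zero_of_le _ le_rfl))]
    at hmem
  refine ⟨fun x hx => hk x (.inl hx), fun x hx => ?_, fun y => ?_⟩
  · obtain rfl | hlt := eq_or_lt_of_le (show (n : ℤ) ≤ x from hx)
    · exact hmem.1
    · exact hk x (.inr hlt)
  · by_cases hy : -(n : ℤ) ≤ y ∧ y < n
    · exact hmem.2 y hy.1 hy.2
    · have hzero : h y = 0 ∧ h (y + 1) = 0 := by
        by_cases hyn : (n : ℤ) ≤ y
        · exact ⟨hh.eq_zero_of_ge y hyn, hh.eq_zero_of_ge _ (by omega)⟩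
        · exact ⟨hh.eq_zero_of_le y (by omega), hh.eq_zero_of_le _ (by omega)⟩
      have hjy := hj y (by omega)
      exact ⟨by omega, by omega, by omega, by omega,
        fun p hp => (hh.not_isOpener_of_eq_zero hzero.1 hp).elim, fun _ _ _ => by omega⟩

theorem exists_record_eq (l : List (ℕ × ℕ)) (x : ℤ) :
    ∃ k j : ℤ → ℕ, record k j l.length x = l ∧ (∀ y, y ≤ x ∨ x + l.length < y → k y = 0) ∧
      ∀ y, y < x ∨ x + l.length ≤ y → j y = 0 := by
  obtain ⟨f, hf, hzero⟩ := exists_sample_eq l x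
  refine ⟨fun y => (f (y - 1)).2, fun y => (f y).1, ?_, fun y hy => ?_, fun y hy => ?_⟩
  · simpa only [record, add_sub_cancel_right] using hf
  · exact congrArg Prod.snd (hzero (y - 1) (by omega))
  · exact congrArg Prod.fst (hzero y hy)

end Columns

/-! ### Strips along a path -/

section Strips

variable {h : ℤ → ℤ} {k j : ℤ → ℕ} {i : ℕ} {a b x : ℤ}

/-- The boxes at level `i` (the `i`-th boxes from below) over the columns from `a` to `b`, for a
skew shape with lower boundary `h`. -/
def strip (h : ℤ → ℤ) (i : ℕ) (a b : ℤ) : Finset (ℤ × ℤ) :=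
  (Icc a b).image fun x => (x, h x + 2 * i)

/-- The set of boxes `t` contains the box at level `i` over column `x`. -/
def HasBox (h : ℤ → ℤ) (t : Finset (ℤ × ℤ)) (x : ℤ) (i : ℕ) : Prop := (x, h x + 2 * i) ∈ t

theorem mem_strip {z : ℤ} : (x, z) ∈ strip h i a b ↔ a ≤ x ∧ x ≤ b ∧ z = h x + 2 * i := by
  simp only [strip, mem_image, mem_Icc, Prod.mk.injEq]
  constructor
  · rintro ⟨x, hx, rfl, rfl⟩
    exact ⟨hx.1, hx.2, rfl⟩
  · rintro ⟨hax, hxb, rfl⟩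
    exact ⟨x, ⟨hax, hxb⟩, rfl, rfl⟩

theorem hasBox_strip {m : ℕ} : HasBox h (strip h i a b) x m ↔ a ≤ x ∧ x ≤ b ∧ m = i := by
  rw [HasBox, mem_strip]
  omega

theorem strip_start_injective {m : ℕ} {a' b' : ℤ} (hab : a ≤ b) (hab' : a' ≤ b')
    (heq : strip h i a b = strip h m a' b') : a = a' ∧ i = m := by
  have hstart : HasBox h (strip h i a b) a i := hasBox_strip.2 ⟨le_rfl, hab, rfl⟩
  have hstart' : HasBox h (strip h m a' b') a' m := hasBox_strip.2 ⟨le_rfl, hab', rfl⟩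
  rw [heq, hasBox_strip] at hstart
  rw [← heq, hasBox_strip] at hstart'
  omega

/-! ### Runs -/

/-- `[a, b]` is a maximal interval of columns whose boxes at level `i` are joined, when over
column `x` there are `k x` boxes and the lowest `j x` are joined to their neighbours over
`x + 1`. -/
structure IsRun (k j : ℤ → ℕ) (i : ℕ) (a b : ℤ) : Prop where
  le : a ≤ b
  lt_count : i < k a
  joined : ∀ x, a ≤ x → x < b → i < j x
  left_end : j (a - 1) ≤ i
  right_end : j b ≤ i

/-- The right end of the run at level `i` that starts at column `a`. -/
def runEnd (j : ℤ → ℕ) (i : ℕ) (a : ℤ) : ℤ := sInf {b | a ≤ b ∧ j b ≤ i}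

theorem IsRun.runEnd_eq (hr : IsRun k j i a b) : runEnd j i a = b :=
  IsLeast.csInf_eq ⟨⟨hr.le, hr.right_end⟩, fun _ hz =>
    not_lt.1 fun hlt => (hr.joined _ hz.1 hlt).not_ge hz.2⟩

theorem IsRun.unique {a' b' : ℤ} (hr : IsRun k j i a b) (hr' : IsRun k j i a' b')
    (hx : a ≤ x ∧ x ≤ b) (hx' : a' ≤ x ∧ x ≤ b') : a = a' ∧ b = b' := by
  have hjoined := hr.joined (a' - 1)
  have hjoined' := hr'.joined (a - 1)
  have hleft := hr.left_end
  have hleft' := hr'.left_end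
  obtain rfl : a = a' := by omega
  exact ⟨rfl, hr.runEnd_eq.symm.trans hr'.runEnd_eq⟩

/-- The pairs `(y, i)` such that a run at level `i` starts at column `y + 1`. -/
def runStarts (n : ℕ) (k j : ℤ → ℕ) : Finset (Σ _ : ℤ, ℕ) :=
  (Ico (-(n : ℤ)) n).sigma fun y => Ico (j y) (k (y + 1))

/-- The strips over all runs: the tiles of the tiling that has `(k, j)` as its history. -/
def runStrips (n : ℕ) (h : ℤ → ℤ) (k j : ℤ → ℕ) : Finset (Finset (ℤ × ℤ)) :=
  (runStarts n k j).image fun p => strip h p.2 (p.1 + 1) (runEnd j p.2 (p.1 + 1))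

namespace IsHistory

theorem mem_Ioo (H : IsHistory n h k j) (hx : i < k x) : -(n : ℤ) < x ∧ x < n := by
  constructor <;> by_contra! hout
  · exact absurd (H.columns_of_le x hout) (by omega)
  · exact absurd (H.columns_of_ge x hout) (by omega)

theorem lt_count_of_isRun (H : IsHistory n h k j) (hr : IsRun k j i a b) (hax : a ≤ x)
    (hxb : x ≤ b) : i < k x := by
  obtain rfl | hlt := hax.eq_or_lt
  · exact hr.lt_count
  · have hright := (H.step (x - 1)).le_right
    rw [sub_add_cancel] at hright
    exact (hr.joined (x - 1) (by omega) (by omega)).trans_le hright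

theorem exists_isRun (H : IsHistory n h k j) (hx : i < k x) :
    ∃ a b, IsRun k j i a b ∧ a ≤ x ∧ x ≤ b := by
  have hxn := H.mem_Ioo hx
  have hjn : j n = 0 := Nat.le_zero.1 (H.columns_of_ge n le_rfl ▸ (H.step n).le_left)
  have hjn' : j (-n - 1) = 0 :=
    Nat.le_zero.1 (H.columns_of_le (-n - 1) (by omega) ▸ (H.step (-n - 1)).le_left)
  obtain ⟨b, ⟨hxb, hb⟩, hleast⟩ := Int.exists_least_of_bdd (P := fun b => x ≤ b ∧ j b ≤ i)
    ⟨x, fun z hz => hz.1⟩ ⟨n, hxn.2.le, by omega⟩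
  obtain ⟨a, ⟨hax, ha⟩, hgreatest⟩ :=
    Int.exists_greatest_of_bdd (P := fun a => a ≤ x ∧ j (a - 1) ≤ i)
      ⟨x, fun z hz => hz.1⟩ ⟨-n, hxn.1.le, by omega⟩
  have hjoined : ∀ y, a ≤ y → y < b → i < j y := fun y hay hyb => by
    by_contra! hy
    obtain hxy | hyx := le_or_gt x y
    · exact absurd (hleast y ⟨hxy, hy⟩) (by omega)
    · exact absurd (hgreatest (y + 1) ⟨by omega, by rwa [add_sub_cancel_right]⟩) (by omega)
  refine ⟨a, b, ⟨hax.trans hxb, ?_, hjoined, ha, hb⟩, hax, hxb⟩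
  obtain rfl | hlt := hax.eq_or_lt
  · exact hx
  · exact (hjoined a le_rfl (by omega)).trans_le (H.step a).le_left

theorem exists_isRun_of_start (H : IsHistory n h k j) {y : ℤ} (hleft : j y ≤ i)
    (hy : i < k (y + 1)) : ∃ b, IsRun k j i (y + 1) b := by
  obtain ⟨a, b, hr, hay, hyb⟩ := H.exists_isRun hy
  have hjoined := hr.joined y
  obtain rfl : a = y + 1 := by omega
  exact ⟨b, hr⟩

theorem mem_runStarts (H : IsHistory n h k j) {p : Σ _ : ℤ, ℕ} :
    p ∈ runStarts n k j ↔ j p.1 ≤ p.2 ∧ p.2 < k (p.1 + 1) := by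
  rw [runStarts, mem_sigma, mem_Ico, mem_Ico, and_iff_right_iff_imp]
  intro hp
  have := H.mem_Ioo hp.2
  omega

theorem mem_runStrips (H : IsHistory n h k j) {t : Finset (ℤ × ℤ)} :
    t ∈ runStrips n h k j ↔ ∃ i a b, IsRun k j i a b ∧ t = strip h i a b := by
  rw [runStrips, mem_image]
  constructor
  · rintro ⟨p, hp, rfl⟩
    rw [H.mem_runStarts] at hp
    obtain ⟨b, hr⟩ := H.exists_isRun_of_start hp.1 hp.2
    exact ⟨_, _, b, hr, by rw [hr.runEnd_eq]⟩
  · rintro ⟨i, a, b, hr, rfl⟩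
    refine ⟨⟨a - 1, i⟩, H.mem_runStarts.2 ⟨hr.left_end, ?_⟩, ?_⟩
    · simpa using hr.lt_count
    · simp only [sub_add_cancel, hr.runEnd_eq]

theorem card_runStrips (H : IsHistory n h k j) :
    #(runStrips n h k j) = ∑ y ∈ Ico (-(n : ℤ)) n, (k (y + 1) - j y) := by
  have hle : ∀ p ∈ runStarts n k j, p.1 + 1 ≤ runEnd j p.2 (p.1 + 1) := fun p hp => by
    rw [H.mem_runStarts] at hp
    obtain ⟨b, hr⟩ := H.exists_isRun_of_start hp.1 hp.2
    exact hr.runEnd_eq ▸ hr.le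
  rw [runStrips, card_image_of_injOn fun p hp q hq heq => ?_, runStarts, card_sigma]
  · simp only [Nat.card_Ico]
  · have hpq := strip_start_injective (hle p hp) (hle q hq) heq
    exact Sigma.ext (by omega) (heq_of_eq hpq.2)

theorem le_of_above (H : IsHistory n h k j) (hh : IsDyckHeight n h) {p z : ℤ} (hpz : p ≤ z)
    (habove : ∀ w, p < w → w ≤ z → h p < h w) : j p ≤ j z := by
  obtain ⟨r, hr⟩ := Int.eq_ofNat_of_zero_le (sub_nonneg.2 hpz)
  induction r using Nat.strong_induction_on generalizing z with
  | _ r ih =>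
    obtain rfl | hlt := hpz.eq_or_lt
    · exact le_rfl
    · obtain ⟨p', hpp', hp'⟩ := hh.exists_isOpener hlt (habove z hlt le_rfl)
      have hp'z := hp'.lt
      exact (ih (p' - p).toNat (by omega) hpp' (fun w hw hwp => habove w hw (by omega))
        (by omega)).trans ((H.step z).opener_le p' hp')

theorem right_le_of_isRun (H : IsHistory n h k j) (hh : IsDyckHeight n h) (hr : IsRun k j i a b)
    (hax : a ≤ x) (hxb : x ≤ b) : h b ≤ h x := by
  obtain rfl | hlt := hxb.eq_or_lt
  · exact le_rfl
  · by_contra! hhlt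
    obtain ⟨p, hxp, hp⟩ := hh.exists_isOpener hlt hhlt
    have hjoined := hr.joined p (hax.trans hxp) hp.lt
    exact (hjoined.trans_le ((H.step b).opener_le p hp)).not_ge hr.right_end

theorem left_le_of_isRun (H : IsHistory n h k j) (hh : IsDyckHeight n h) (hr : IsRun k j i a b)
    (hax : a ≤ x) (hxb : x ≤ b) : h a ≤ h x := by
  by_contra! hlt
  obtain ⟨r, ⟨har, hra⟩, hleast⟩ := Int.exists_least_of_bdd (P := fun r => a ≤ r ∧ h r < h a)
    ⟨a, fun z hz => hz.1⟩ ⟨x, hax, hlt⟩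
  have hrx := hleast x ⟨hax, hlt⟩
  have har' : a < r := har.lt_of_ne (by rintro rfl; omega)
  have hge : ∀ z, a < z → z ≤ r - 1 → h a ≤ h z := fun z haz hzr => by
    by_contra! hz
    exact absurd (hleast z ⟨haz.le, hz⟩) (by omega)
  have hstep := (hh.le_add_one (r - 1)).2
  rw [sub_add_cancel] at hstep
  have hreturn : h (r - 1) = h a := by
    obtain heq | hlt' := (show a ≤ r - 1 by omega).eq_or_lt
    · rw [← heq]
    · have := hge (r - 1) hlt' le_rfl
      omega
  have hrnonneg := hh.nonneg r
  have hzero := hh.eq_zero_of_le (-n) le_rfl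
  obtain ⟨p, -, hp⟩ := hh.exists_isOpener (H.mem_Ioo hr.lt_count).1 (by omega)
  have hpa := hp.lt
  have hclose := (H.step (r - 1)).le_opener p (hp.of_return (by omega) hreturn hge)
    (by rw [sub_add_cancel]; omega)
  have hopen : j p ≤ j (a - 1) :=
    H.le_of_above hh (by omega) fun w hpw hwa => hp.above w hpw (by omega)
  have hjoined := hr.joined (r - 1) (by omega) (by omega)
  have hleft := hr.left_end
  omega

theorem isDyckTile_strip (H : IsHistory n h k j) (hh : IsDyckHeight n h)
    (hr : IsRun k j i a b) : IsDyckTile (strip h i a b) := by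
  have ha := H.mem_Ioo hr.lt_count
  have hb := H.mem_Ioo (H.lt_count_of_isRun hr hr.le le_rfl)
  refine ⟨a, b, fun x => h x + 2 * i, hr.le, fun x hax hxb => ?_, ?_, fun x hax hxb => ?_, rfl⟩
  · have hstep := hh.step x (by omega) (by omega)
    beta_reduce
    omega
  · exact congrArg (· + 2 * (i : ℤ)) ((H.right_le_of_isRun hh hr le_rfl hr.le).antisymm
      (H.left_le_of_isRun hh hr hr.le le_rfl))
  · exact Int.add_le_add_right (H.left_le_of_isRun hh hr hax hxb) _

end IsHistory

end Strips

/-! ### The tiles of a cover-inclusive tiling are strips -/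

theorem tile_snd_unique {t : Finset (ℤ × ℤ)} (ht : IsDyckTile t) {x z z' : ℤ}
    (hz : (x, z) ∈ t) (hz' : (x, z') ∈ t) : z = z' := by
  obtain ⟨a, b, f, -, -, -, -, rfl⟩ := ht
  simp only [mem_image, Prod.mk.injEq] at hz hz'
  obtain ⟨_, _, rfl, rfl⟩ := hz
  obtain ⟨_, _, rfl, rfl⟩ := hz'
  rfl

theorem tile_adjacent {t : Finset (ℤ × ℤ)} (ht : IsDyckTile t) {x x' z z' : ℤ}
    (hx : x' = x + 1 ∨ x = x' + 1) (hz : (x, z) ∈ t) (hz' : (x', z') ∈ t) :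
    z' = z + 1 ∨ z' = z - 1 := by
  obtain ⟨a, b, f, -, hf, -, -, rfl⟩ := ht
  simp only [mem_image, mem_Icc, Prod.mk.injEq] at hz hz'
  obtain ⟨_, hxab, rfl, rfl⟩ := hz
  obtain ⟨_, hxab', rfl, rfl⟩ := hz'
  obtain rfl | rfl := hx
  · exact hf _ hxab.1 (by omega)
  · have := hf _ hxab'.1 (by omega)
    omega

theorem mem_skewCells_iff {lam mu : DyckPath n} {x z : ℤ} {m : ℕ}
    (hm : mu.ht x = lam.ht x + 2 * m) :
    (x, z) ∈ skewCells lam mu ↔ ∃ i < m, z = lam.ht x + 2 * (i : ℤ) := by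
  simp only [skewCells, mem_filter, mem_product, mem_Icc]
  constructor
  · rintro ⟨⟨⟨hx, hxn⟩, _⟩, hlower, hupper, hparity⟩
    have hpar := (isDyckHeight_ht lam).parity hx hxn
    exact ⟨((z - lam.ht x) / 2).toNat, by omega, by omega⟩
  · rintro ⟨i, hi, rfl⟩
    have hnonneg := ht_nonneg lam x
    have hle := ht_le mu x
    have hx : -(n : ℤ) ≤ x := by
      by_contra! hx
      have := (isDyckHeight_ht mu).eq_zero_of_le x hx.le
      omega
    have hxn : x ≤ n := by
      by_contra! hxn
      have := (isDyckHeight_ht mu).eq_zero_of_ge x hxn.le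
      omega
    have hpar := (isDyckHeight_ht lam).parity hx hxn
    omega

/-- The number of boxes over column `x`. -/
def colCount (T : DyckTiling n) (x : ℤ) : ℕ := ((T.upper.ht x - T.lower.ht x) / 2).toNat

theorem colCount_of_le (T : DyckTiling n) {x : ℤ} (hx : x ≤ -n) : colCount T x = 0 := by
  rw [colCount, (isDyckHeight_ht T.upper).eq_zero_of_le x hx,
    (isDyckHeight_ht T.lower).eq_zero_of_le x hx]
  rfl

theorem colCount_of_ge (T : DyckTiling n) {x : ℤ} (hx : n ≤ x) : colCount T x = 0 := by
  rw [colCount, (isDyckHeight_ht T.upper).eq_zero_of_ge x hx,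
    (isDyckHeight_ht T.lower).eq_zero_of_ge x hx]
  rfl

theorem upper_ht_eq (T : DyckTiling n) (x : ℤ) :
    T.upper.ht x = T.lower.ht x + 2 * colCount T x := by
  obtain hx | hx := le_or_gt x (-n)
  · rw [colCount_of_le T hx, (isDyckHeight_ht T.upper).eq_zero_of_le x hx,
      (isDyckHeight_ht T.lower).eq_zero_of_le x hx, Nat.cast_zero, mul_zero, add_zero]
  obtain hxn | hxn := le_or_gt (n : ℤ) x
  · rw [colCount_of_ge T hxn, (isDyckHeight_ht T.upper).eq_zero_of_ge x hxn,
      (isDyckHeight_ht T.lower).eq_zero_of_ge x hxn, Nat.cast_zero, mul_zero, add_zero]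
  have hbelow := T.below x
  have hlower := (isDyckHeight_ht T.lower).parity hx.le hxn.le
  have hupper := (isDyckHeight_ht T.upper).parity hx.le hxn.le
  rw [colCount]
  omega

theorem mem_skewCells (T : DyckTiling n) {x z : ℤ} :
    (x, z) ∈ skewCells T.lower T.upper ↔ ∃ i < colCount T x, z = T.lower.ht x + 2 * i :=
  mem_skewCells_iff (upper_ht_eq T x)

section Tiles

variable {T : DyckTiling n} {t u : Finset (ℤ × ℤ)} {x y z : ℤ} {i m : ℕ}

theorem exists_tile (hi : i < colCount T x) : ∃ t ∈ T.tiles, HasBox T.lower.ht t x i := by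
  have hbox : (x, T.lower.ht x + 2 * (i : ℤ)) ∈ T.tiles.biUnion id := by
    rw [T.cover, mem_skewCells]
    exact ⟨i, hi, rfl⟩
  exact mem_biUnion.1 hbox

theorem exists_level (ht : t ∈ T.tiles) (hz : (x, z) ∈ t) :
    ∃ i < colCount T x, z = T.lower.ht x + 2 * i := by
  rw [← mem_skewCells, ← T.cover]
  exact mem_biUnion.2 ⟨t, ht, hz⟩

theorem HasBox.lt (ht : t ∈ T.tiles) (hbox : HasBox T.lower.ht t x i) : i < colCount T x := by
  obtain ⟨i', hi', heq⟩ := exists_level ht hbox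
  omega

theorem tile_eq_of_mem (ht : t ∈ T.tiles) (hu : u ∈ T.tiles) {c : ℤ × ℤ} (hct : c ∈ t)
    (hcu : c ∈ u) : t = u := by
  by_contra hne
  exact disjoint_left.1 (T.disj t ht u hu hne) hct hcu

theorem exists_box_of_below (hT : T.CoverInclusive) (ht : t ∈ T.tiles) (hu : u ∈ T.tiles)
    (hxt : HasBox T.lower.ht t x i) (hxu : HasBox T.lower.ht u x m) (hlt : m < i)
    (hy : (y, z) ∈ t) : ∃ l, HasBox T.lower.ht u y l := by
  obtain ⟨z', hz'⟩ := hT t ht u hu ⟨_, hxt, _, hxu, rfl, by simpa using hlt⟩ _ hy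
  obtain ⟨l, -, rfl⟩ := exists_level hu hz'
  exact ⟨l, hz'⟩

theorem exists_rise_below (hT : T.CoverInclusive) (ht : t ∈ T.tiles) (hxy : y = x + 1 ∨ x = y + 1)
    (hx : HasBox T.lower.ht t x i) (hy : HasBox T.lower.ht t y (i + 1)) :
    ∃ u ∈ T.tiles, ∃ l, l + 1 = i ∧ HasBox T.lower.ht u x l ∧ HasBox T.lower.ht u y i := by
  obtain ⟨u, hu, hyu⟩ := exists_tile (Nat.lt_of_succ_lt (hy.lt ht))
  obtain ⟨l, hxu⟩ := exists_box_of_below hT ht hu hy hyu (Nat.lt_succ_self _) hx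
  have hne : l ≠ i := by
    rintro rfl
    obtain rfl := tile_eq_of_mem ht hu hx hxu
    have := tile_snd_unique (T.isDyck t ht) hy hyu
    omega
  have hadj := tile_adjacent (T.isDyck t ht) hxy hx hy
  have hadj' := tile_adjacent (T.isDyck u hu) hxy hxu hyu
  have hlower : T.lower.ht x ≤ T.lower.ht y + 1 := by
    obtain rfl | rfl := hxy
    · exact ((isDyckHeight_ht T.lower).le_add_one x).2
    · exact ((isDyckHeight_ht T.lower).le_add_one y).1
  exact ⟨u, hu, l, by omega, hxu, hyu⟩

theorem not_hasBox_succ (hT : T.CoverInclusive) (ht : t ∈ T.tiles) (hxy : y = x + 1 ∨ x = y + 1)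
    (hx : HasBox T.lower.ht t x i) : ¬HasBox T.lower.ht t y (i + 1) := fun hy => by
  induction i generalizing t with
  | zero =>
    obtain ⟨_, _, _, hl, -⟩ := exists_rise_below hT ht hxy hx hy
    omega
  | succ i ih =>
    obtain ⟨u, hu, l, hl, hxu, hyu⟩ := exists_rise_below hT ht hxy hx hy
    obtain rfl : l = i := by omega
    exact ih hu hxu hyu

theorem HasBox.adjacent (hT : T.CoverInclusive) (ht : t ∈ T.tiles)
    (hx : HasBox T.lower.ht t x i) (hz : (x + 1, z) ∈ t) : HasBox T.lower.ht t (x + 1) i := by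
  obtain ⟨m, -, rfl⟩ := exists_level ht hz
  have hadj := tile_adjacent (T.isDyck t ht) (.inl rfl) hx hz
  have hlower := (isDyckHeight_ht T.lower).le_add_one x
  obtain rfl | rfl | rfl : m = i ∨ m = i + 1 ∨ i = m + 1 := by omega
  · exact hz
  · exact (not_hasBox_succ hT ht (.inl rfl) hx hz).elim
  · exact (not_hasBox_succ hT ht (.inr rfl) hz hx).elim

theorem tile_eq_strip (hT : T.CoverInclusive) (ht : t ∈ T.tiles) :
    ∃ (i : ℕ) (a b : ℤ), t = strip T.lower.ht i a b ∧ a ≤ b ∧ T.lower.ht b = T.lower.ht a ∧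
      ∀ x, a ≤ x → x ≤ b → T.lower.ht a ≤ T.lower.ht x := by
  obtain ⟨a, b, f, hab, -, hba, hmin, himage⟩ := T.isDyck t ht
  have hmem : ∀ y, a ≤ y → y ≤ b → (y, f y) ∈ t := fun y hay hyb =>
    himage ▸ mem_image_of_mem _ (mem_Icc.2 ⟨hay, hyb⟩)
  obtain ⟨i, -, hfa⟩ := exists_level ht (hmem a le_rfl hab)
  have hf : ∀ y, a ≤ y → y ≤ b → f y = T.lower.ht y + 2 * i := by
    intro y hay
    induction y, hay using Int.leInduction with
    | base => exact fun _ => hfa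
    | succ y hay ih =>
      intro hyb
      have hnext := hmem (y + 1) (by omega) hyb
      have hbox : HasBox T.lower.ht t y i := by
        rw [HasBox, ← ih (by omega)]
        exact hmem y hay (by omega)
      exact tile_snd_unique (T.isDyck t ht) hnext (hbox.adjacent hT ht hnext)
  refine ⟨i, a, b, ?_, hab, ?_, fun x hax hxb => ?_⟩
  · rw [himage, strip]
    refine image_congr fun y hy => ?_
    rw [coe_Icc] at hy
    rw [hf y hy.1 hy.2]
  · have := hf b hab le_rfl
    omega
  · have := hmin x hax hxb
    rw [hf x hax hxb] at this
    omega

theorem HasBox.level_eq (hT : T.CoverInclusive) (ht : t ∈ T.tiles)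
    (hx : HasBox T.lower.ht t x i) (hy : HasBox T.lower.ht t y m) : i = m := by
  obtain ⟨l, a, b, rfl, -⟩ := tile_eq_strip hT ht
  rw [hasBox_strip] at hx hy
  omega

/-- The boxes at level `i` over columns `x` and `x + 1` lie in the same tile. -/
def Joined (T : DyckTiling n) (x : ℤ) (i : ℕ) : Prop :=
  ∃ t ∈ T.tiles, HasBox T.lower.ht t x i ∧ HasBox T.lower.ht t (x + 1) i

theorem Joined.mono (hT : T.CoverInclusive) (hmi : m ≤ i) (hjoined : Joined T x i) :
    Joined T x m := by
  obtain rfl | hlt := hmi.eq_or_lt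
  · exact hjoined
  obtain ⟨t, ht, hx, hx'⟩ := hjoined
  obtain ⟨u, hu, hxu⟩ := exists_tile (hlt.trans (hx.lt ht))
  obtain ⟨l, hxu'⟩ := exists_box_of_below hT ht hu hx hxu hlt hx'
  obtain rfl := hxu.level_eq hT hu hxu'
  exact ⟨u, hu, hxu, hxu'⟩

/-- The number of tiles that cross the step from column `x` to column `x + 1`; in a
cover-inclusive tiling these contain the lowest boxes of the two columns. -/
def crossCount (T : DyckTiling n) (x : ℤ) : ℕ := sInf {i | ¬Joined T x i}

theorem lt_crossCount (hT : T.CoverInclusive) : i < crossCount T x ↔ Joined T x i := by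
  refine ⟨fun hlt => not_not.1 (Nat.notMem_of_lt_sInf hlt), fun hjoined => ?_⟩
  by_contra! hle
  have hnonempty : {i | ¬Joined T x i}.Nonempty :=
    ⟨colCount T x, fun ⟨t, ht, hx, _⟩ => (hx.lt ht).false⟩
  exact Nat.sInf_mem hnonempty (hjoined.mono hT hle)

theorem crossCount_le_left (hT : T.CoverInclusive) (x : ℤ) : crossCount T x ≤ colCount T x :=
  le_of_forall_lt fun i hi => by
    obtain ⟨t, ht, hx, -⟩ := (lt_crossCount hT).1 hi
    exact hx.lt ht

theorem crossCount_le_right (hT : T.CoverInclusive) (x : ℤ) :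
    crossCount T x ≤ colCount T (x + 1) :=
  le_of_forall_lt fun i hi => by
    obtain ⟨t, ht, -, hx⟩ := (lt_crossCount hT).1 hi
    exact hx.lt ht

theorem joined_iff (hT : T.CoverInclusive) :
    Joined T x i ↔ ∃ a b, strip T.lower.ht i a b ∈ T.tiles ∧ T.lower.ht b = T.lower.ht a ∧
      (∀ y, a ≤ y → y ≤ b → T.lower.ht a ≤ T.lower.ht y) ∧ a ≤ x ∧ x < b := by
  constructor
  · rintro ⟨t, ht, hx, hx'⟩
    obtain ⟨l, a, b, rfl, -, hreturn, hmin⟩ := tile_eq_strip hT ht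
    obtain ⟨hax, -, rfl⟩ := hasBox_strip.1 hx
    exact ⟨a, b, ht, hreturn, hmin, hax, (hasBox_strip.1 hx').2.1⟩
  · rintro ⟨a, b, ht, -, -, hax, hxb⟩
    exact ⟨_, ht, hasBox_strip.2 ⟨hax, hxb.le, rfl⟩, hasBox_strip.2 ⟨by omega, hxb, rfl⟩⟩

theorem isHistoryStep_of_tiling (hT : T.CoverInclusive) (y : ℤ) :
    IsHistoryStep T.lower.ht (colCount T) (crossCount T) y := by
  have hupper := (isDyckHeight_ht T.upper).le_add_one y
  rw [upper_ht_eq, upper_ht_eq] at hupper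
  refine ⟨crossCount_le_left hT y, crossCount_le_right hT y, fun _ => by omega,
    fun _ => by omega, fun p hp => le_of_forall_lt fun i hi => ?_,
    fun p hp hdown => le_of_forall_lt fun i hi => ?_⟩
  all_goals
    rw [lt_crossCount hT, joined_iff hT] at hi ⊢
    obtain ⟨a, b, ht, hreturn, hmin, hax, hxb⟩ := hi
    have hpy := hp.lt
    have hheight := hp.height
    refine ⟨a, b, ht, hreturn, hmin, ?_⟩
  · have hyb : y < b := by
      by_contra! hby
      have := hp.above b hxb hby
      have := hmin p hax hxb.le
      omega
    exact ⟨by omega, hyb⟩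
  · have hap : a ≤ p := by
      by_contra! hpa
      have := hp.above a hpa hax
      have := hmin (y + 1) (by omega) hxb
      omega
    exact ⟨hap, by omega⟩

theorem isHistory_of_tiling (hT : T.CoverInclusive) :
    IsHistory n T.lower.ht (colCount T) (crossCount T) :=
  ⟨fun _ => colCount_of_le T, fun _ => colCount_of_ge T, isHistoryStep_of_tiling hT⟩

theorem isRun_of_strip_mem (hT : T.CoverInclusive) {a b : ℤ} (hab : a ≤ b)
    (ht : strip T.lower.ht i a b ∈ T.tiles) : IsRun (colCount T) (crossCount T) i a b := by
  have ha : HasBox T.lower.ht (strip T.lower.ht i a b) a i := hasBox_strip.2 ⟨le_rfl, hab, rfl⟩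
  have hb : HasBox T.lower.ht (strip T.lower.ht i a b) b i := hasBox_strip.2 ⟨hab, le_rfl, rfl⟩
  refine ⟨hab, ha.lt ht, fun x hax hxb => (lt_crossCount hT).2 ⟨_, ht, ?_, ?_⟩, ?_, ?_⟩
  · exact hasBox_strip.2 ⟨hax, hxb.le, rfl⟩
  · exact hasBox_strip.2 ⟨by omega, by omega, rfl⟩
  · by_contra! hlt
    obtain ⟨u, hu, hleft, hright⟩ := (lt_crossCount hT).1 hlt
    rw [sub_add_cancel] at hright
    obtain rfl := tile_eq_of_mem ht hu ha hright
    have := (hasBox_strip.1 hleft).1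
    omega
  · by_contra! hlt
    obtain ⟨u, hu, hleft, hright⟩ := (lt_crossCount hT).1 hlt
    obtain rfl := tile_eq_of_mem ht hu hb hleft
    have := (hasBox_strip.1 hright).2.1
    omega

theorem tiles_eq_runStrips (hT : T.CoverInclusive) :
    T.tiles = runStrips n T.lower.ht (colCount T) (crossCount T) := by
  ext t
  rw [(isHistory_of_tiling hT).mem_runStrips]
  constructor
  · intro ht
    obtain ⟨i, a, b, rfl, hab, -⟩ := tile_eq_strip hT ht
    exact ⟨i, a, b, isRun_of_strip_mem hT hab ht, rfl⟩
  · rintro ⟨i, a, b, hr, rfl⟩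
    obtain ⟨u, hu, hbox⟩ := exists_tile hr.lt_count
    obtain ⟨i', a', b', rfl, hab', -⟩ := tile_eq_strip hT hu
    obtain ⟨haa', hab, rfl⟩ := hasBox_strip.1 hbox
    obtain ⟨rfl, rfl⟩ :=
      hr.unique (isRun_of_strip_mem hT hab' hu) ⟨le_rfl, hr.le⟩ ⟨haa', hab⟩
    exact hu

end Tiles

theorem tiling_ext {T T' : DyckTiling n} (hT : T.CoverInclusive) (hT' : T'.CoverInclusive)
    (hlower : T.lower = T'.lower) (hcol : colCount T = colCount T')
    (hcross : crossCount T = crossCount T') : T = T' := by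
  have hupper : T.upper = T'.upper := ht_injective <| funext fun x => by
    rw [upper_ht_eq, upper_ht_eq, hlower, hcol]
  have htiles : T.tiles = T'.tiles := by
    rw [tiles_eq_runStrips hT, tiles_eq_runStrips hT', hlower, hcol, hcross]
  cases T
  cases T'
  congr

/-! ### From histories to tilings -/

section TilingOfHistory

variable {lam mu : DyckPath n} {k j : ℤ → ℕ}

theorem IsHistory.exists_upper (H : IsHistory n lam.ht k j) :
    ∃ mu : DyckPath n, ∀ x, mu.ht x = lam.ht x + 2 * k x := by
  have hlam := isDyckHeight_ht lam
  have hupper : IsDyckHeight n fun x => lam.ht x + 2 * k x := by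
    refine ⟨fun x hx hxn => ?_, fun x hx => ?_, fun x hx => ?_, fun x => ?_⟩
    · obtain hup | hdown := hlam.step x hx hxn
      · have := (H.step x).up hup
        omega
      · have := (H.step x).down hdown
        omega
    · rw [hlam.eq_zero_of_le x hx, H.columns_of_le x hx, Nat.cast_zero, mul_zero, add_zero]
    · rw [hlam.eq_zero_of_ge x hx, H.columns_of_ge x hx, Nat.cast_zero, mul_zero, add_zero]
    · have := hlam.nonneg x
      omega
  obtain ⟨mu, hmu⟩ := exists_ht_eq hupper
  exact ⟨mu, congrFun hmu⟩

theorem IsHistory.disjoint_runStrips (H : IsHistory n lam.ht k j) {t u : Finset (ℤ × ℤ)}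
    (ht : t ∈ runStrips n lam.ht k j) (hu : u ∈ runStrips n lam.ht k j) (hne : t ≠ u) :
    Disjoint t u := by
  obtain ⟨i, a, b, hr, rfl⟩ := H.mem_runStrips.1 ht
  obtain ⟨i', a', b', hr', rfl⟩ := H.mem_runStrips.1 hu
  refine disjoint_left.2 fun ⟨x, z⟩ hz hz' => hne ?_
  obtain ⟨hax, hxb, rfl⟩ := mem_strip.1 hz
  obtain ⟨hax', hxb', rfl⟩ := hasBox_strip.1 hz'
  obtain ⟨rfl, rfl⟩ := hr.unique hr' ⟨hax, hxb⟩ ⟨hax', hxb'⟩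
  rfl

theorem IsHistory.biUnion_runStrips (H : IsHistory n lam.ht k j)
    (hmu : ∀ x, mu.ht x = lam.ht x + 2 * k x) :
    (runStrips n lam.ht k j).biUnion id = skewCells lam mu := by
  ext ⟨x, z⟩
  rw [mem_skewCells_iff (hmu x), mem_biUnion]
  constructor
  · rintro ⟨t, ht, hz⟩
    obtain ⟨i, a, b, hr, rfl⟩ := H.mem_runStrips.1 ht
    obtain ⟨hax, hxb, rfl⟩ := mem_strip.1 hz
    exact ⟨i, H.lt_count_of_isRun hr hax hxb, rfl⟩
  · rintro ⟨i, hi, rfl⟩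
    obtain ⟨a, b, hr, hax, hxb⟩ := H.exists_isRun hi
    exact ⟨_, H.mem_runStrips.2 ⟨i, a, b, hr, rfl⟩, mem_strip.2 ⟨hax, hxb, rfl⟩⟩

/-- The tiling with history `(k, j)` and upper path `mu`. -/
def tilingOfHistory (H : IsHistory n lam.ht k j) (hmu : ∀ x, mu.ht x = lam.ht x + 2 * k x) :
    DyckTiling n where
  lower := lam
  upper := mu
  below x := by
    rw [hmu]
    omega
  tiles := runStrips n lam.ht k j
  isDyck t ht := by
    obtain ⟨i, a, b, hr, rfl⟩ := H.mem_runStrips.1 ht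
    exact H.isDyckTile_strip (isDyckHeight_ht lam) hr
  disj _ ht _ hu hne := H.disjoint_runStrips ht hu hne
  cover := H.biUnion_runStrips hmu

theorem coverInclusive_tilingOfHistory (H : IsHistory n lam.ht k j)
    (hmu : ∀ x, mu.ht x = lam.ht x + 2 * k x) : (tilingOfHistory H hmu).CoverInclusive := by
  rintro t ht u hu ⟨⟨x, z⟩, hz, ⟨_, z'⟩, hz', rfl, hlt⟩ ⟨y, w⟩ hw
  obtain ⟨i, a, b, hr, rfl⟩ := H.mem_runStrips.1 ht
  obtain ⟨i', a', b', hr', rfl⟩ := H.mem_runStrips.1 hu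
  obtain ⟨hax, hxb, rfl⟩ := mem_strip.1 hz
  obtain ⟨hax', hxb', rfl⟩ := mem_strip.1 hz'
  obtain ⟨hay, hyb, -⟩ := mem_strip.1 hw
  have hii' : i' < i := by
    dsimp only at hlt
    omega
  have ha : a' ≤ a := by
    by_contra! haa'
    have := hr.joined (a' - 1) (by omega) (by omega)
    have := hr'.left_end
    omega
  have hb : b ≤ b' := by
    by_contra! hbb'
    have := hr.joined b' (by omega) hbb'
    have := hr'.right_end
    omega
  exact ⟨_, mem_strip.2 ⟨ha.trans hay, hyb.trans hb, rfl⟩⟩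

theorem colCount_tilingOfHistory (H : IsHistory n lam.ht k j)
    (hmu : ∀ x, mu.ht x = lam.ht x + 2 * k x) : colCount (tilingOfHistory H hmu) = k := by
  ext x
  change ((mu.ht x - lam.ht x) / 2).toNat = k x
  have := hmu x
  omega

theorem crossCount_tilingOfHistory (H : IsHistory n lam.ht k j)
    (hmu : ∀ x, mu.ht x = lam.ht x + 2 * k x) : crossCount (tilingOfHistory H hmu) = j := by
  ext x
  refine eq_of_forall_lt_iff fun i => ?_
  rw [lt_crossCount (coverInclusive_tilingOfHistory H hmu)]
  constructor
  · rintro ⟨t, ht, hx, hx'⟩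
    obtain ⟨i', a, b, hr, rfl⟩ := H.mem_runStrips.1 ht
    obtain ⟨hax, -, rfl⟩ := hasBox_strip.1 hx
    exact hr.joined x hax (hasBox_strip.1 hx').2.1
  · intro hi
    obtain ⟨a, b, hr, hax, hxb⟩ := H.exists_isRun (hi.trans_le (H.step x).le_left)
    have hxb' : x < b := hxb.lt_of_ne fun heq => (heq ▸ hr.right_end).not_gt hi
    exact ⟨_, H.mem_runStrips.2 ⟨i, a, b, hr, rfl⟩, hasBox_strip.2 ⟨hax, hxb, rfl⟩,
      hasBox_strip.2 ⟨by omega, hxb', rfl⟩⟩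

end TilingOfHistory

/-! ### The bijection between tilings and histories -/

/-- The history of a tiling: for each step of the lower path, the number of tiles crossing it and
the number of tiles over its right end. -/
def tilingHistory (T : DyckTiling n) : List (ℕ × ℕ) :=
  record (colCount T) (crossCount T) (2 * n) (-n)

section TilingHistory

variable {lam : DyckPath n} {T T' : DyckTiling n}

theorem tilingHistory_mem_histories (hT : T.CoverInclusive) :
    tilingHistory T ∈ histories (stepWord T.lower.ht (2 * n) (-n)) 0 [] :=
  record_mem_histories (isDyckHeight_ht T.lower) (isHistory_of_tiling hT)

theorem tiling_eq_of_tilingHistory_eq (hT : T.CoverInclusive) (hT' : T'.CoverInclusive)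
    (hlower : T.lower = T'.lower) (heq : tilingHistory T = tilingHistory T') : T = T' := by
  have hrecord : ∀ y, -(n : ℤ) ≤ y → y < n →
      crossCount T y = crossCount T' y ∧ colCount T (y + 1) = colCount T' (y + 1) :=
    fun y hy hyn => Prod.ext_iff.1 (sample_eq_sample_iff.1 heq y hy (by push_cast; omega))
  have hcol : colCount T = colCount T' := funext fun x => by
    obtain hx | hx := le_or_gt x (-n)
    · rw [colCount_of_le T hx, colCount_of_le T' hx]
    obtain hxn | hxn := lt_or_ge (n : ℤ) x
    · rw [colCount_of_ge T hxn.le, colCount_of_ge T' hxn.le]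
    · simpa only [sub_add_cancel] using (hrecord (x - 1) (by omega) (by omega)).2
  refine tiling_ext hT hT' hlower hcol (funext fun x => ?_)
  by_cases hx : -(n : ℤ) ≤ x ∧ x < n
  · exact (hrecord x hx.1 hx.2).1
  · have hle := crossCount_le_left hT x
    have hle' := crossCount_le_left hT' x
    have hzero : colCount T x = 0 := by
      obtain hlt | hge := lt_or_ge x (-n)
      · exact colCount_of_le T hlt.le
      · exact colCount_of_ge T (by omega)
    rw [← hcol] at hle'
    omega

theorem exists_tilingHistory_eq {l : List (ℕ × ℕ)}
    (hl : l ∈ histories (stepWord lam.ht (2 * n) (-n)) 0 []) :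
    ∃ T : DyckTiling n, T.CoverInclusive ∧ T.lower = lam ∧ tilingHistory T = l := by
  have hlength : l.length = 2 * n := by
    rw [length_of_mem_histories hl, stepWord, length_sample]
  obtain ⟨k, j, hrecord, hk, hj⟩ := exists_record_eq l (-n)
  rw [hlength] at hrecord hk hj
  have H : IsHistory n lam.ht k j :=
    isHistory_of_record_mem_histories (isDyckHeight_ht lam) (fun x hx => hk x (by omega))
      (fun x hx => hj x (by omega)) (hrecord.symm ▸ hl)
  obtain ⟨mu, hmu⟩ := H.exists_upper
  refine ⟨tilingOfHistory H hmu, coverInclusive_tilingOfHistory H hmu, rfl, ?_⟩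
  rw [tilingHistory, colCount_tilingOfHistory, crossCount_tilingOfHistory, hrecord]

theorem area_eq_sum (T : DyckTiling n) :
    T.area = ∑ y ∈ Ico (-(n : ℤ)) n, colCount T (y + 1) := by
  let box : (Σ _ : ℤ, ℕ) → ℤ × ℤ := fun p => (p.1 + 1, T.lower.ht (p.1 + 1) + 2 * p.2)
  have hinj : Function.Injective box := fun ⟨y, i⟩ ⟨y', i'⟩ heq => by
    simp only [box, Prod.mk.injEq, add_left_inj] at heq
    obtain ⟨rfl, hi⟩ := heq
    obtain rfl : i = i' := by omega
    rfl
  have hcells : skewCells T.lower T.upper =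
      ((Ico (-(n : ℤ)) n).sigma fun y => range (colCount T (y + 1))).image box := by
    ext ⟨x, z⟩
    rw [mem_skewCells, mem_image]
    constructor
    · rintro ⟨i, hi, rfl⟩
      have hx : -(n : ℤ) < x ∧ x < n := by
        constructor <;> by_contra! hout
        · exact hi.ne_bot (colCount_of_le T hout)
        · exact hi.ne_bot (colCount_of_ge T hout)
      refine ⟨⟨x - 1, i⟩, mem_sigma.2 ⟨mem_Ico.2 (by dsimp only; omega), ?_⟩, ?_⟩
      · simpa only [sub_add_cancel, mem_range] using hi
      · simp only [box, sub_add_cancel]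
    · rintro ⟨⟨y, i⟩, hp, heq⟩
      obtain ⟨rfl, rfl⟩ := Prod.mk.inj heq
      exact ⟨i, mem_range.1 (mem_sigma.1 hp).2, rfl⟩
  rw [DyckTiling.area, hcells, card_image_of_injective _ hinj, card_sigma]
  simp only [card_range]

theorem numTiles_eq_sum (hT : T.CoverInclusive) :
    T.numTiles = ∑ y ∈ Ico (-(n : ℤ)) n, (colCount T (y + 1) - crossCount T y) := by
  rw [DyckTiling.numTiles, tiles_eq_runStrips hT, (isHistory_of_tiling hT).card_runStrips]

theorem art_eq_histWeight (hT : T.CoverInclusive) :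
    T.art = histWeight (stepWord T.lower.ht (2 * n) (-n)) (tilingHistory T) := by
  have hweight := two_mul_histWeight (tilingHistory_mem_histories hT)
  have hend : -(n : ℤ) + ↑(2 * n) = n := by
    push_cast
    ring
  have hcross : ((tilingHistory T).map Prod.fst).sum =
      ∑ y ∈ Ico (-(n : ℤ)) n, crossCount T y := by
    rw [tilingHistory, record, map_sample, sum_sample, hend]
    rfl
  have hcol : ((tilingHistory T).map Prod.snd).sum =
      ∑ y ∈ Ico (-(n : ℤ)) n, colCount T (y + 1) := by
    rw [tilingHistory, record, map_sample, sum_sample, hend]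
    rfl
  have hle := sum_le_sum fun y (_ : y ∈ Ico (-(n : ℤ)) n) => crossCount_le_right hT y
  rw [hcross, hcol, List.sum_nil] at hweight
  rw [DyckTiling.art, area_eq_sum, numTiles_eq_sum hT,
    sum_tsub_distrib _ fun y _ => crossCount_le_right hT y]
  omega

end TilingHistory

theorem finsum_art_eq_weightSum (lam : DyckPath n) :
    ∑ᶠ T : {T : DyckTiling n // T.CoverInclusive ∧ T.lower = lam}, (X : ℤ[X]) ^ T.1.art =
      weightSum (stepWord lam.ht (2 * n) (-n)) 0 [] := by
  let w := stepWord lam.ht (2 * n) (-n)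
  let toHistory (T : {T : DyckTiling n // T.CoverInclusive ∧ T.lower = lam}) :
      histories w 0 [] :=
    ⟨tilingHistory T.1, by simpa only [T.2.2] using tilingHistory_mem_histories T.2.1⟩
  have hbij : Function.Bijective toHistory := by
    refine ⟨fun T T' heq => Subtype.ext ?_, fun ⟨l, hl⟩ => ?_⟩
    · exact tiling_eq_of_tilingHistory_eq T.2.1 T'.2.1 (T.2.2.trans T'.2.2.symm)
        (congrArg Subtype.val heq)
    · obtain ⟨T, hT, hlower, rfl⟩ := exists_tilingHistory_eq hl
      exact ⟨⟨T, hT, hlower⟩, rfl⟩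
  let weight (l : histories w 0 []) : ℤ[X] := X ^ histWeight w l
  have hart : ∀ T, X ^ T.1.art = weight (toHistory T) := fun T => by
    simp only [weight, toHistory, art_eq_histWeight T.2.1, T.2.2, w]
  rw [finsum_eq_of_bijective toHistory hbij hart, finsum_eq_sum_of_fintype]
  exact sum_coe_sort (histories w 0 []) fun l => X ^ histWeight w l

end DyckTilingArt

/-- For every Dyck path `λ` of order `n`,
`Σ_{T ∈ D(λ,*)} q^{art(T)} = [n]_q! / Π_{chords c of λ} [|c|]_q`
(stated in the equivalent cleared-denominator form, as an identity in `ℤ[q]`;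
the product over chords is expressed via an arbitrary labeling of the chords). -/
theorem dyck_tilings_art_generating_function (n : ℕ) (lam : DyckPath n)
    (C : ChordLabeling lam) :
    (∑ᶠ T : {T : DyckTiling n // T.CoverInclusive ∧ T.lower = lam},
        (Polynomial.X : Polynomial ℤ) ^ T.1.art) * ∏ i : Fin n, qint (chordLen C i) =
      qfact n := by
  obtain ⟨u, hword, hsemilength⟩ := (DyckTilingArt.isDyckHeight_ht lam).exists_dyckWord
  rw [DyckTilingArt.finsum_art_eq_weightSum, DyckTilingArt.prod_qint_chordLen, ← hword,
    DyckTilingArt.weightSum_mul_chordProd, hsemilength]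

end
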